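/- Consider the NPIV model Y_{1i} = h0(Y_{2i}) + eps_i with E[eps_i | X_i] = 0, where Z_i = (X_i, Y_{1i}, Y_{2i}) is strictly stationary, X_i and Y_{2i} are supported on [0,1]^d, and the distributions of X and Y_2 have Lebesgue densities bounded away from zero and infinity. Assume (eps_i, F_{i-1}) is a strictly stationary martingale difference sequence with F_{i-1} = sigma(X_i, X_{i-1}, eps_{i-1}, X_{i-2}, eps_{i-2}, ...), that E[eps_i^2 | F_{i-1}] is bounded away from zero and infinity almost surely, and that E[|eps_i|^{2+delta}] < infinity for some delta > 0. Let psi^J : [0,1]^d -> R^J and b^K : [0,1]^d -> R^K be continuous sieve basis vectors with sup_y ||psi^J(y)|| <= C sqrt(J), sup_x ||b^K(x)|| <= C sqrt(K), and the smallest eigenvalues of E[psi^J(Y_2) psi^J(Y_2)'] and E[b^K(X) b^K(X)'] bounded below by lambda > 0 for all J, K; assume the orthonormalized basis psi-tilde^J is differentiable with ||grad psi-tilde^J(y)|| <= C J^alpha for all y, for constants C < infinity and alpha > 0 not depending on J. Let sigma_{JK} > 0 be the smallest singular value of S = E[psi-tilde^J(Y_2) b-tilde^K(X)'], let S-hat =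 Psi-tilde' B-tilde / n, and define the sieve NPIV estimator h-hat(y) = psi-tilde^J(y)' [S-hat (B-tilde' B-tilde/n)^- S-hat']^- S-hat (B-tilde' B-tilde/n)^- B-tilde' Y / n and P_n h0(y) = psi-tilde^J(y)' [S-hat (B-tilde' B-tilde/n)^- S-hat']^- S-hat (B-tilde' B-tilde/n)^- B-tilde' H0 / n, where Y = (Y_{11},...,Y_{1n})' and H0 = (h0(Y_{21}),...,h0(Y_{2n}))'. Suppose n, J = J(n), K = K(n) -> infinity with (i) J <= K, K <= C (n / log n)^{delta/(2+delta)}, and sigma_{JK}^{-1} sqrt(K (log n)/n) <= C, and (ii) sigma_{JK}^{-1} ( ||B-tilde' B-tilde/n - I_K|| + ||S-hat - S|| ) = O_p( sqrt((log n)/K) ) = o_p(1). Then sup_y |h-hat(y) - P_n h0(y)| = O_p( sigma_{JK}^{-1} sqrt( K (log n) / n ) ), and consequently sup_y |h0(y) - h-hat(y)| <= sup_y |h0(y) - P_n h0(y)| + O_p( sigma_{JK}^{-1} sqrt( K (log n) / n ) ). -/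

import Mathlib

/-!
The difference `ĥ - P_n h₀` is linear in the errors: at `y` it equals `ψ̃ y ⬝ L̂ w`, where
`w = n⁻¹ ∑ b̃(Xᵢ) εᵢ` is the score and `L̂` the sample coefficient matrix.  Put
`L = (S Sᵀ)⁻¹ S`, the coefficient matrix obtained from the population moments.

* Replacing `L̂` by `L` costs a multiple of `σ⁻²` times the estimation error of the moment matrices,
  times `‖w‖` (`coef_perturb`).  Since `‖w‖ = O_p(√(K/n))` by orthogonality of martingale
  differences (`prob_eucNorm_avg_le`), condition (ii) makes this of the required order, after
  multiplication by `‖ψ̃ y‖ ≤ B √K`.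
* The function `y ↦ ψ̃ y ⬝ L w` is replaced by its values on a grid of mesh about `J^{-α}`; the
  gradient bound makes the cost a multiple of `σ⁻¹ ‖w‖` (`abs_dot_sub_le_of_grad`).
* At a grid point, `ψ̃ y ⬝ L w` is an average of martingale differences `c(Xᵢ) εᵢ`.  The errors are
  truncated at `T = (n / log n)^{1/(2+δ)}` and recentred (`exists_trunc`).  The `(2+δ)`-th moment
  and the growth condition on `K` make the bias negligible (`rate_bounds`, `prob_sum_diff_le`),
  while the truncated sum obeys a Freedman-type inequality derived from an exponential
  supermartingale (`integral_exp_le_one`, `tail_two_sided`).  Its predictable quadratic variation is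
  controlled by the sample Gram matrix, which lies within `1/2` of the identity with high
  probability.
* The grid has polynomially many points in `n`, so a union bound (`prob_grid_le`) with a large
  constant in the exponent `log n` finishes the estimate (`grid_count_le`).

`det_bound` combines these estimates on one realization, and `core_bound` adds up the probabilities
of the exceptional events.  The second claim is the triangle inequality for suprema; as real
suprema of unbounded functions are `0`, it is also checked in that degenerate case
(`iSup_abs_sub_le`).
-/

noncomputable section
open Matrix MeasureTheory ProbabilityTheory Filter
open scoped ENNReal

/-- Euclidean norm on ℝ^K. -/
def eucNorm {K : ℕ} (v : Fin K → ℝ) : ℝ := Real.sqrt (∑ k, v k ^ 2)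

/-- Spectral norm (largest singular value) of a real matrix. -/
def specNorm {m n : ℕ} (A : Matrix (Fin m) (Fin n) ℝ) : ℝ :=
  sSup {r | ∃ v : Fin n → ℝ, eucNorm v ≤ 1 ∧ r = eucNorm (A.mulVec v)}

/-- Smallest (J-th) singular value of a `J × K` matrix (`J ≤ K`):
`inf { ‖Sᵀ v‖ : v ∈ ℝ^J, ‖v‖ = 1 }`. -/
def minSingVal {J K : ℕ} (S : Matrix (Fin J) (Fin K) ℝ) : ℝ :=
  sInf {r | ∃ v : Fin J → ℝ, eucNorm v = 1 ∧ r = eucNorm (Sᵀ.mulVec v)}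

/-- `W n = O_p(a n)` on a fixed probability space. -/
def IsBigOpF {Ω : Type} [MeasurableSpace Ω] (P : Measure Ω)
    (W : ℕ → Ω → ℝ) (a : ℕ → ℝ) : Prop :=
  ∀ ε : ℝ, 0 < ε → ∃ M : ℝ,
    limsup (fun n => (P {ω | M * a n < |W n ω|}).toReal) atTop ≤ ε

/-! ### Euclidean and spectral norms, and perturbation of the coefficient matrix -/

lemma eucNorm_eq {K : ℕ} (v : Fin K → ℝ) :
    eucNorm v = ‖(WithLp.toLp 2 v : EuclideanSpace ℝ (Fin K))‖ := by
  simp [eucNorm, EuclideanSpace.norm_eq]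

lemma eucNorm_nonneg {K : ℕ} (v : Fin K → ℝ) : 0 ≤ eucNorm v := Real.sqrt_nonneg _

lemma eucNorm_sq {K : ℕ} (v : Fin K → ℝ) : eucNorm v ^ 2 = v ⬝ᵥ v := by
  rw [eucNorm, Real.sq_sqrt (Finset.sum_nonneg fun _ _ => sq_nonneg _)]
  simp [dotProduct, sq]

lemma eucNorm_add_le {K : ℕ} (u v : Fin K → ℝ) :
    eucNorm (u + v) ≤ eucNorm u + eucNorm v := by
  simp only [eucNorm_eq, WithLp.toLp_add]; exact norm_add_le _ _

lemma eucNorm_sub_le {K : ℕ} (u v : Fin K → ℝ) :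
    eucNorm (u - v) ≤ eucNorm u + eucNorm v := by
  simp only [eucNorm_eq, WithLp.toLp_sub]; exact norm_sub_le _ _

lemma eucNorm_smul {K : ℕ} (c : ℝ) (v : Fin K → ℝ) :
    eucNorm (c • v) = |c| * eucNorm v := by
  simp only [eucNorm_eq, WithLp.toLp_smul, norm_smul, Real.norm_eq_abs]

lemma eucNorm_eq_zero {K : ℕ} {v : Fin K → ℝ} (h : eucNorm v = 0) : v = 0 := by
  rw [eucNorm_eq, norm_eq_zero] at h
  simpa using h

lemma abs_dot_le {K : ℕ} (u v : Fin K → ℝ) : |u ⬝ᵥ v| ≤ eucNorm u * eucNorm v := by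
  have h := abs_real_inner_le_norm (WithLp.toLp 2 u : EuclideanSpace ℝ (Fin K)) (WithLp.toLp 2 v)
  rw [← eucNorm_eq, ← eucNorm_eq] at h
  rw [dotProduct_comm]
  simpa [EuclideanSpace.inner_eq_star_dotProduct] using h

lemma dot_le {K : ℕ} (u v : Fin K → ℝ) : u ⬝ᵥ v ≤ eucNorm u * eucNorm v :=
  (le_abs_self _).trans (abs_dot_le u v)

/-- Moving a matrix across the dot product. -/
lemma dot_mulVec_transpose {J K : ℕ} (A : Matrix (Fin J) (Fin K) ℝ) (u : Fin J → ℝ)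
    (v : Fin K → ℝ) : u ⬝ᵥ A *ᵥ v = (Aᵀ *ᵥ u) ⬝ᵥ v := by
  rw [dotProduct_mulVec, mulVec_transpose]

lemma specNorm_bddAbove {m n : ℕ} (A : Matrix (Fin m) (Fin n) ℝ) :
    BddAbove {r | ∃ v : Fin n → ℝ, eucNorm v ≤ 1 ∧ r = eucNorm (A.mulVec v)} := by
  refine ⟨Real.sqrt (∑ i, eucNorm (A i) ^ 2), ?_⟩
  rintro r ⟨v, hv, rfl⟩
  refine Real.sqrt_le_sqrt (Finset.sum_le_sum fun i _ => ?_)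
  rw [← sq_abs]
  have h := abs_dot_le (A i) v
  have h2 : eucNorm (A i) * eucNorm v ≤ eucNorm (A i) :=
    mul_le_of_le_one_right (eucNorm_nonneg _) hv
  exact pow_le_pow_left₀ (abs_nonneg _) (h.trans h2) 2

lemma specNorm_nonneg {m n : ℕ} (A : Matrix (Fin m) (Fin n) ℝ) : 0 ≤ specNorm A := by
  refine Real.sSup_nonneg ?_
  rintro r ⟨v, _, rfl⟩
  exact eucNorm_nonneg _

lemma eucNorm_mulVec_le {m n : ℕ} (A : Matrix (Fin m) (Fin n) ℝ) (v : Fin n → ℝ) :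
    eucNorm (A *ᵥ v) ≤ specNorm A * eucNorm v := by
  rcases (eucNorm_nonneg v).eq_or_lt with h | h
  · rw [eucNorm_eq_zero h.symm, mulVec_zero]; simp [eucNorm]
  · have : eucNorm (A *ᵥ ((eucNorm v)⁻¹ • v)) ≤ specNorm A := by
      refine le_csSup (specNorm_bddAbove A) ⟨_, ?_, rfl⟩
      rw [eucNorm_smul, abs_of_pos (inv_pos.2 h), inv_mul_cancel₀ h.ne']
    rw [mulVec_smul, eucNorm_smul, abs_of_pos (inv_pos.2 h), inv_mul_le_iff₀ h] at this
    linarith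

lemma eucNorm_transpose_mulVec_le {m n : ℕ} (A : Matrix (Fin m) (Fin n) ℝ) {s : ℝ} (hs : 0 ≤ s)
    (hA : ∀ v, eucNorm (A *ᵥ v) ≤ s * eucNorm v) (u : Fin m → ℝ) :
    eucNorm (Aᵀ *ᵥ u) ≤ s * eucNorm u := by
  rcases (eucNorm_nonneg (Aᵀ *ᵥ u)).eq_or_lt with h | h
  · rw [← h]; exact mul_nonneg hs (eucNorm_nonneg u)
  · have h1 : eucNorm (Aᵀ *ᵥ u) ^ 2 ≤ eucNorm u * (s * eucNorm (Aᵀ *ᵥ u)) := by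
      rw [eucNorm_sq, ← dot_mulVec_transpose]
      exact (dot_le _ _).trans (mul_le_mul_of_nonneg_left (hA _) (eucNorm_nonneg _))
    nlinarith

lemma minSingVal_mul_le {J K : ℕ} (S : Matrix (Fin J) (Fin K) ℝ) (v : Fin J → ℝ) :
    minSingVal S * eucNorm v ≤ eucNorm (Sᵀ *ᵥ v) := by
  rcases (eucNorm_nonneg v).eq_or_lt with h | h
  · rw [← h, mul_zero]; exact eucNorm_nonneg _
  · have : minSingVal S ≤ eucNorm (Sᵀ *ᵥ ((eucNorm v)⁻¹ • v)) := by
      refine csInf_le ⟨0, ?_⟩ ⟨_, ?_, rfl⟩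
      · rintro r ⟨v, _, rfl⟩
        exact eucNorm_nonneg _
      · rw [eucNorm_smul, abs_of_pos (inv_pos.2 h), inv_mul_cancel₀ h.ne']
    rw [mulVec_smul, eucNorm_smul, abs_of_pos (inv_pos.2 h), le_inv_mul_iff₀ h] at this
    linarith

/-- A real square matrix with trivial kernel has a right inverse given by `⁻¹`. -/
lemma mul_inv_of_ker {m : ℕ} (A : Matrix (Fin m) (Fin m) ℝ)
    (h : ∀ v, A *ᵥ v = 0 → v = 0) : A * A⁻¹ = 1 := by
  refine mul_nonsing_inv _ ?_
  rw [← isUnit_iff_isUnit_det, ← mulVec_injective_iff_isUnit]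
  intro x y hxy
  have := h (x - y) (by rw [mulVec_sub]; exact sub_eq_zero.2 hxy)
  exact sub_eq_zero.1 this

lemma mulVec_eq_zero_of_gram {J K : ℕ} {S : Matrix (Fin J) (Fin K) ℝ} {σ : ℝ} (hσ : 0 < σ)
    (hS : ∀ v, σ * eucNorm v ≤ eucNorm (Sᵀ *ᵥ v)) (v : Fin J → ℝ) (hz : Sᵀ *ᵥ v = 0) :
    v = 0 := by
  have h := hS v
  rw [hz] at h
  have h0 : eucNorm (0 : Fin K → ℝ) = 0 := by simp [eucNorm]
  rw [h0] at h
  exact eucNorm_eq_zero (le_antisymm (by nlinarith [eucNorm_nonneg v]) (eucNorm_nonneg v))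

/-- The population coefficient map `(S Sᵀ)⁻¹ S` sends `w` to the least squares solution of
`Sᵀ β ≈ w`. -/
lemma popCoef_normal {J K : ℕ} {S : Matrix (Fin J) (Fin K) ℝ} {σ : ℝ} (hσ : 0 < σ)
    (hS : ∀ v, σ * eucNorm v ≤ eucNorm (Sᵀ *ᵥ v)) (w : Fin K → ℝ) :
    S *ᵥ (Sᵀ *ᵥ (((S * Sᵀ)⁻¹ * S) *ᵥ w)) = S *ᵥ w := by
  have h := mul_inv_of_ker (S * Sᵀ) (by
    intro v hv
    refine mulVec_eq_zero_of_gram hσ hS v (eucNorm_eq_zero ?_)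
    have : eucNorm (Sᵀ *ᵥ v) ^ 2 = 0 := by
      rw [eucNorm_sq, ← dot_mulVec_transpose, mulVec_mulVec, hv, dotProduct_zero]
    exact pow_eq_zero_iff (two_ne_zero) |>.1 this)
  rw [mulVec_mulVec, mulVec_mulVec, ← Matrix.mul_assoc, h, Matrix.one_mul]

lemma popCoef_norm_le {J K : ℕ} {S : Matrix (Fin J) (Fin K) ℝ} {σ : ℝ} (hσ : 0 < σ)
    (hS : ∀ v, σ * eucNorm v ≤ eucNorm (Sᵀ *ᵥ v)) (w : Fin K → ℝ) :
    eucNorm (((S * Sᵀ)⁻¹ * S) *ᵥ w) ≤ σ⁻¹ * eucNorm w := by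
  have h := popCoef_normal hσ hS w
  set β := ((S * Sᵀ)⁻¹ * S) *ᵥ w
  have h1 : eucNorm (Sᵀ *ᵥ β) ^ 2 ≤ eucNorm (Sᵀ *ᵥ β) * eucNorm w := by
    rw [eucNorm_sq, ← dot_mulVec_transpose, h, dot_mulVec_transpose]
    exact dot_le _ _
  have h2 : eucNorm (Sᵀ *ᵥ β) ≤ eucNorm w := by
    rcases (eucNorm_nonneg (Sᵀ *ᵥ β)).eq_or_lt with h0 | h0
    · rw [← h0]; exact eucNorm_nonneg _
    · nlinarith
  rw [le_inv_mul_iff₀ hσ]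
  exact (hS β).trans h2

/-- Perturbation bound: replacing the population moments `(1, S)` by the sample moments
`(A, Sh)` in the coefficient map changes the coefficient by at most
`10 σ⁻² (‖A - 1‖ + ‖Sh - S‖) ‖w‖`.  With `g = A⁻¹ (w - Shᵀ β̂)` the normal equations read
`A g + Shᵀ β̂ = w`, `Sh g = 0`, and pairing the difference with the population normal
equations against `Sᵀ (β̂ - β)` gives the bound. -/
lemma coef_perturb {J K : ℕ} {S Sh : Matrix (Fin J) (Fin K) ℝ} {A : Matrix (Fin K) (Fin K) ℝ}
    {σ a s : ℝ} (hσ : 0 < σ) (hσ1 : σ ≤ 1)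
    (hS : ∀ v, σ * eucNorm v ≤ eucNorm (Sᵀ *ᵥ v))
    (ha0 : 0 ≤ a) (hs0 : 0 ≤ s)
    (ha : ∀ v, eucNorm ((A - 1) *ᵥ v) ≤ a * eucNorm v)
    (hs : ∀ v, eucNorm ((Sh - S) *ᵥ v) ≤ s * eucNorm v)
    (hsmall : σ⁻¹ * (a + s) ≤ 1 / 2) (w : Fin K → ℝ) :
    eucNorm (((Sh * A⁻¹ * Shᵀ)⁻¹ * Sh * A⁻¹) *ᵥ w - ((S * Sᵀ)⁻¹ * S) *ᵥ w)
      ≤ 10 * σ⁻¹ * (σ⁻¹ * (a + s)) * eucNorm w := by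
  have hst := eucNorm_transpose_mulVec_le (Sh - S) hs0 hs
  rw [inv_mul_le_iff₀ hσ] at hsmall
  -- coercivity of `A`
  have hAv : ∀ v, A *ᵥ v = v + (A - 1) *ᵥ v := fun v => by
    rw [sub_mulVec, one_mulVec]; abel
  have hcoer : ∀ v, eucNorm v ^ 2 ≤ 2 * (v ⬝ᵥ A *ᵥ v) := fun v => by
    rw [hAv, dotProduct_add, ← eucNorm_sq]
    have h1 := neg_le_of_abs_le (abs_dot_le v ((A - 1) *ᵥ v))
    have h2 := mul_le_mul_of_nonneg_left (ha v) (eucNorm_nonneg v)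
    nlinarith [sq_nonneg (eucNorm v)]
  have hAinv : A * A⁻¹ = 1 := mul_inv_of_ker A (fun v hv => by
    have h := hcoer v
    rw [hv, dotProduct_zero] at h
    exact eucNorm_eq_zero (pow_eq_zero_iff two_ne_zero |>.1 (le_antisymm (by linarith) (sq_nonneg _))))
  have hShv : ∀ v, Shᵀ *ᵥ v = Sᵀ *ᵥ v + (Sh - S)ᵀ *ᵥ v := fun v => by
    rw [transpose_sub, sub_mulVec]; abel
  have hSh : ∀ v, σ / 2 * eucNorm v ≤ eucNorm (Shᵀ *ᵥ v) := fun v => by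
    have h1 : eucNorm (Sᵀ *ᵥ v) ≤ eucNorm (Shᵀ *ᵥ v) + eucNorm ((Sh - S)ᵀ *ᵥ v) := by
      have := eucNorm_sub_le (Shᵀ *ᵥ v) ((Sh - S)ᵀ *ᵥ v)
      rwa [hShv v, add_sub_cancel_right, ← hShv v] at this
    nlinarith [hS v, hst v, eucNorm_nonneg v]
  have hM : (Sh * A⁻¹ * Shᵀ) * (Sh * A⁻¹ * Shᵀ)⁻¹ = 1 := mul_inv_of_ker _ (fun v hv => by
    refine mulVec_eq_zero_of_gram (half_pos hσ) hSh v ?_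
    have h := hcoer (A⁻¹ *ᵥ (Shᵀ *ᵥ v))
    rw [mulVec_mulVec _ A, hAinv, one_mulVec, dotProduct_comm, ← dot_mulVec_transpose,
      mulVec_mulVec, mulVec_mulVec, ← Matrix.mul_assoc, hv, dotProduct_zero] at h
    have h0 := eucNorm_eq_zero
      (pow_eq_zero_iff two_ne_zero |>.1 (le_antisymm (by linarith) (sq_nonneg _)))
    have : A *ᵥ (A⁻¹ *ᵥ (Shᵀ *ᵥ v)) = 0 := by rw [mulVec_mulVec v, h0, mulVec_zero]
    rwa [mulVec_mulVec, hAinv, one_mulVec] at this)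
  set bh := ((Sh * A⁻¹ * Shᵀ)⁻¹ * Sh * A⁻¹) *ᵥ w with hbh
  have hβ := popCoef_normal hσ hS w
  set β := ((S * Sᵀ)⁻¹ * S) *ᵥ w with hβdef
  set g := A⁻¹ *ᵥ (w - Shᵀ *ᵥ bh) with hg
  have hAg : A *ᵥ g = w - Shᵀ *ᵥ bh := by rw [hg, mulVec_mulVec, hAinv, one_mulVec]
  have hShg : Sh *ᵥ g = 0 := by
    rw [hg, mulVec_mulVec, mulVec_sub, mulVec_mulVec, hbh, mulVec_mulVec, ← Matrix.mul_assoc, ← Matrix.mul_assoc,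
      hM, Matrix.one_mul, sub_self]
  have hgw : eucNorm g ≤ 2 * eucNorm w := by
    have h := hcoer g
    rw [hAg, dotProduct_sub, dotProduct_comm g (Shᵀ *ᵥ bh), ← dot_mulVec_transpose, hShg,
      dotProduct_zero, sub_zero] at h
    have h2 := dot_le g w
    rcases (eucNorm_nonneg g).eq_or_lt with h0 | h0
    · rw [← h0]; linarith [eucNorm_nonneg w]
    · nlinarith
  have hbw : σ * eucNorm bh ≤ 8 * eucNorm w := by
    have h1 : Shᵀ *ᵥ bh = w - (g + (A - 1) *ᵥ g) := by rw [← hAv, hAg]; abel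
    have h2 := eucNorm_sub_le w (g + (A - 1) *ᵥ g)
    have h3 := eucNorm_add_le g ((A - 1) *ᵥ g)
    rw [← h1] at h2
    nlinarith [hSh bh, ha g, eucNorm_nonneg g]
  set η := bh - β with hη
  set z := Sᵀ *ᵥ η with hz
  have hzeq : z = (w - Sᵀ *ᵥ β) - A *ᵥ g - (Sh - S)ᵀ *ᵥ bh := by
    rw [hz, hη, mulVec_sub, hAg, hShv bh]; abel
  have hzz : eucNorm z ^ 2 ≤
      eucNorm z * (a * eucNorm g + s * eucNorm bh) + eucNorm η * (s * eucNorm g) := by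
    have e1 : z ⬝ᵥ (w - Sᵀ *ᵥ β) = 0 := by
      rw [hz, ← dot_mulVec_transpose, mulVec_sub, hβ, sub_self, dotProduct_zero]
    have e2 : z ⬝ᵥ g = - (η ⬝ᵥ (Sh - S) *ᵥ g) := by
      rw [hz, ← dot_mulVec_transpose, sub_mulVec, hShg, zero_sub, dotProduct_neg, neg_neg]
    have e3 : eucNorm z ^ 2 = η ⬝ᵥ (Sh - S) *ᵥ g - z ⬝ᵥ (A - 1) *ᵥ g
        - z ⬝ᵥ (Sh - S)ᵀ *ᵥ bh := by
      have e4 : z ⬝ᵥ z = z ⬝ᵥ ((w - Sᵀ *ᵥ β) - A *ᵥ g - (Sh - S)ᵀ *ᵥ bh) := by rw [← hzeq]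
      rw [eucNorm_sq, e4, dotProduct_sub, dotProduct_sub, e1, hAv, dotProduct_add, e2]
      ring
    have f1 := (dot_le η ((Sh - S) *ᵥ g)).trans
      (mul_le_mul_of_nonneg_left (hs g) (eucNorm_nonneg _))
    have f2 := (neg_le_abs _).trans ((abs_dot_le z ((A - 1) *ᵥ g)).trans
      (mul_le_mul_of_nonneg_left (ha g) (eucNorm_nonneg _)))
    have f3 := (neg_le_abs _).trans ((abs_dot_le z ((Sh - S)ᵀ *ᵥ bh)).trans
      (mul_le_mul_of_nonneg_left (hst bh) (eucNorm_nonneg _)))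
    rw [e3]; linarith
  have hηz := hS η
  rw [← hz] at hηz
  have hη0 := eucNorm_nonneg η
  have hw0 := eucNorm_nonneg w
  have hz0 := eucNorm_nonneg z
  have hg0 := eucNorm_nonneg g
  have key : σ * eucNorm z ≤ 10 * (a + s) * eucNorm w := by
    rcases hz0.eq_or_lt with h0 | h0
    · rw [← h0, mul_zero]; positivity
    · have k1 : σ * eucNorm z ^ 2 ≤ eucNorm z * (σ * a * eucNorm g + s * (σ * eucNorm bh)
          + s * eucNorm g) := by
        have : σ * eucNorm η * (s * eucNorm g) ≤ eucNorm z * (s * eucNorm g) :=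
          mul_le_mul_of_nonneg_right hηz (by positivity)
        nlinarith
      have k2 : σ * eucNorm z ≤ σ * a * eucNorm g + s * (σ * eucNorm bh) + s * eucNorm g := by
        refine le_of_mul_le_mul_left ?_ h0
        linarith [k1, show eucNorm z * (σ * eucNorm z) = σ * eucNorm z ^ 2 by ring]
      have k3 : σ * a * eucNorm g ≤ 1 * a * (2 * eucNorm w) := by gcongr
      have k4 : s * (σ * eucNorm bh) ≤ s * (8 * eucNorm w) := by gcongr
      have k5 : s * eucNorm g ≤ s * (2 * eucNorm w) := by gcongr
      nlinarith [mul_nonneg ha0 hw0]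
  have : 10 * σ⁻¹ * (σ⁻¹ * (a + s)) * eucNorm w = σ⁻¹ * (σ⁻¹ * (10 * (a + s) * eucNorm w)) := by
    ring
  rw [this, le_inv_mul_iff₀ hσ, le_inv_mul_iff₀ hσ]
  exact (mul_le_mul_of_nonneg_left hηz hσ.le).trans key

/-! ### Conditional moments and truncation -/

section Martingale

variable {Ω : Type} {m mΩ : MeasurableSpace Ω} {P : Measure Ω}

lemma integrable_bdd_mul' {G f : Ω → ℝ} {B : ℝ} (hG : AEStronglyMeasurable G P)
    (hGB : ∀ ω, |G ω| ≤ B) (hf : Integrable f P) : Integrable (fun ω => G ω * f ω) P :=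
  hf.bdd_mul (c := B) hG (Eventually.of_forall hGB)

lemma integral_mul_condExp [IsProbabilityMeasure P] (hm : m ≤ mΩ)
    {G f : Ω → ℝ} (hG : StronglyMeasurable[m] G) (hf : Integrable f P)
    (hGf : Integrable (fun ω => G ω * f ω) P) :
    ∫ ω, G ω * f ω ∂P = ∫ ω, G ω * (P[f | m]) ω ∂P := by
  have h := condExp_mul_of_stronglyMeasurable_left (μ := P) hG (show Integrable (G * f) P from hGf) hf
  have h2 := integral_condExp (μ := P) hm (f := G * f)
  rw [integral_congr_ae h] at h2
  exact h2.symm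

/-- A conditional second moment bound, tested against bounded nonnegative weights from the
conditioning σ-algebra. -/
lemma integral_mul_sq_le [IsProbabilityMeasure P] (hm : m ≤ mΩ)
    {e : Ω → ℝ} {v : ℝ} (hsq : Integrable (fun ω => e ω ^ 2) P)
    (hvar : ∀ᵐ ω ∂P, (P[fun ω => e ω ^ 2 | m]) ω ≤ v)
    {G : Ω → ℝ} {B : ℝ} (hG : StronglyMeasurable[m] G) (hG0 : ∀ ω, 0 ≤ G ω)
    (hGB : ∀ ω, |G ω| ≤ B) :
    ∫ ω, G ω * e ω ^ 2 ∂P ≤ v * ∫ ω, G ω ∂P := by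
  have hGm : AEStronglyMeasurable G P := (hG.mono hm).aestronglyMeasurable
  rw [integral_mul_condExp hm hG hsq (integrable_bdd_mul' hGm hGB hsq), ← integral_const_mul]
  have hGi : Integrable G P := Integrable.of_bound hGm B (Eventually.of_forall hGB)
  refine integral_mono_ae (integrable_bdd_mul' hGm hGB integrable_condExp) (hGi.const_mul v) ?_
  filter_upwards [hvar] with ω hω
  nlinarith [hG0 ω]

/-- Truncation at level `T` followed by recentring: the result `η` is bounded by `2 T`, is still
conditionally centred with conditional second moment at most `v` (both tested against bounded
`m`-measurable weights `G`), and is `L¹`-close to `e`. -/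
lemma exists_trunc [IsProbabilityMeasure P] (hm : m ≤ mΩ)
    {e : Ω → ℝ} {v T : ℝ} (hT : 0 ≤ T) (he : Measurable e)
    (hzero : P[e | m] =ᵐ[P] 0) (hsq : Integrable (fun ω => e ω ^ 2) P)
    (hvar : ∀ᵐ ω ∂P, (P[fun ω => e ω ^ 2 | m]) ω ≤ v) :
    ∃ mm η : Ω → ℝ, StronglyMeasurable[m] mm ∧
      (∀ ω, η ω = (if |e ω| ≤ T then e ω else 0) - mm ω) ∧
      (∀ ω, |η ω| ≤ 2 * T) ∧
      (∀ (G : Ω → ℝ) (B : ℝ), StronglyMeasurable[m] G → (∀ ω, |G ω| ≤ B) →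
        ∫ ω, G ω * η ω ∂P = 0) ∧
      (∀ (G : Ω → ℝ) (B : ℝ), StronglyMeasurable[m] G → (∀ ω, 0 ≤ G ω) → (∀ ω, |G ω| ≤ B) →
        ∫ ω, G ω * η ω ^ 2 ∂P ≤ v * ∫ ω, G ω ∂P) ∧
      Integrable (fun ω => |e ω - η ω|) P ∧
      ∫ ω, |e ω - η ω| ∂P ≤ 2 * ∫ ω, (if |e ω| ≤ T then 0 else |e ω|) ∂P := by
  have hei : Integrable e P :=
    ((memLp_two_iff_integrable_sq he.aestronglyMeasurable).2 hsq).integrable (by norm_num)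
  have hset : MeasurableSet {ω | |e ω| ≤ T} := measurableSet_le he.abs measurable_const
  set ξ : Ω → ℝ := fun ω => if |e ω| ≤ T then e ω else 0 with hξ
  set ζ : Ω → ℝ := fun ω => if |e ω| ≤ T then 0 else e ω with hζ
  have hξm : Measurable ξ := Measurable.ite hset he measurable_const
  have hζm : Measurable ζ := Measurable.ite hset measurable_const he
  have hξb : ∀ ω, |ξ ω| ≤ T := fun ω => by
    simp only [hξ]; split_ifs with h
    · exact h
    · simpa using hT
  have hξi : Integrable ξ P := Integrable.of_bound hξm.aestronglyMeasurable T (Eventually.of_forall hξb)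
  have hζe : ∀ ω, e ω = ξ ω + ζ ω := fun ω => by
    simp only [hξ, hζ]; split_ifs <;> simp
  have hζi : Integrable ζ P := by
    have : ζ = e - ξ := by ext ω; simp [hζe ω]
    rw [this]; exact hei.sub hξi
  -- the compensator, clipped so that the bound by `T` holds everywhere
  set mm : Ω → ℝ := fun ω => max (-T) (min T ((P[ξ | m]) ω)) with hmm
  have hmmm : StronglyMeasurable[m] mm :=
    (show Continuous fun x : ℝ => max (-T) (min T x) by fun_prop).comp_stronglyMeasurable
      stronglyMeasurable_condExp
  have hmmb : ∀ ω, |mm ω| ≤ T := fun ω => by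
    rw [abs_le]; exact ⟨le_max_left _ _, max_le (by linarith) (min_le_left _ _)⟩
  have hmmae : mm =ᵐ[P] P[ξ | m] := by
    have := ae_bdd_abs_condExp_of_ae_bdd_abs (m := m) (μ := P) (R := T) (f := ξ) (Eventually.of_forall hξb)
    filter_upwards [this] with ω hω
    have := abs_le.1 hω
    simp only [hmm]
    rw [min_eq_right this.2, max_eq_right this.1]
  have hmmi : Integrable mm P :=
    Integrable.of_bound (hmmm.mono hm).aestronglyMeasurable T (Eventually.of_forall hmmb)
  set η : Ω → ℝ := fun ω => ξ ω - mm ω with hη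
  have hηb : ∀ ω, |η ω| ≤ 2 * T := fun ω => by
    have := abs_sub (ξ ω) (mm ω)
    simp only [hη]; linarith [hξb ω, hmmb ω]
  have hηm : AEStronglyMeasurable η P :=
    hξm.aestronglyMeasurable.sub (hmmm.mono hm).aestronglyMeasurable
  have hηi : Integrable η P := hξi.sub hmmi
  have horth : ∀ (G : Ω → ℝ) (B : ℝ), StronglyMeasurable[m] G → (∀ ω, |G ω| ≤ B) →
        ∫ ω, G ω * η ω ∂P = 0 := by
    intro G B hG hGB
    have hGm : AEStronglyMeasurable G P := (hG.mono hm).aestronglyMeasurable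
    have h1 := integral_mul_condExp hm hG hξi (integrable_bdd_mul' hGm hGB hξi)
    have h2 : ∫ ω, G ω * (P[ξ | m]) ω ∂P = ∫ ω, G ω * mm ω ∂P := by
      refine integral_congr_ae ?_
      filter_upwards [hmmae] with ω hω
      rw [hω]
    simp only [hη, mul_sub]
    rw [integral_sub (integrable_bdd_mul' hGm hGB hξi) (integrable_bdd_mul' hGm hGB hmmi), h1, h2,
      sub_self]
  refine ⟨mm, η, hmmm, fun ω => rfl, hηb, horth, ?_, ?_, ?_⟩
  · intro G B hG hG0 hGB
    have hGm : AEStronglyMeasurable G P := (hG.mono hm).aestronglyMeasurable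
    refine le_trans ?_ (integral_mul_sq_le hm hsq hvar hG hG0 hGB)
    have hGmm : StronglyMeasurable[m] (fun ω => G ω * mm ω) := hG.mul hmmm
    have hGmmB : ∀ ω, |G ω * mm ω| ≤ B * T := fun ω => by
      rw [abs_mul]; exact mul_le_mul (hGB ω) (hmmb ω) (abs_nonneg _) ((abs_nonneg _).trans (hGB ω))
    have h0 := horth _ _ hGmm hGmmB
    have hint : Integrable (fun ω => G ω * mm ω * η ω) P :=
      integrable_bdd_mul' (hGmm.mono hm).aestronglyMeasurable hGmmB hηi
    have hint2 : Integrable (fun ω => G ω * e ω ^ 2) P := integrable_bdd_mul' hGm hGB hsq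
    have hη2 : Integrable (fun ω => η ω ^ 2) P := by
      refine Integrable.of_bound (hηm.pow 2) ((2 * T) ^ 2) (Eventually.of_forall fun ω => ?_)
      rw [Real.norm_eq_abs, abs_pow]
      exact pow_le_pow_left₀ (abs_nonneg _) (hηb ω) 2
    calc ∫ ω, G ω * η ω ^ 2 ∂P
        ≤ ∫ ω, (G ω * e ω ^ 2 - 2 * (G ω * mm ω * η ω)) ∂P := by
          refine integral_mono (integrable_bdd_mul' hGm hGB hη2) (hint2.sub (hint.const_mul 2)) ?_
          intro ω
          have hξe : ξ ω ^ 2 ≤ e ω ^ 2 := by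
            simp only [hξ]; split_ifs
            · exact le_rfl
            · simpa using sq_nonneg (e ω)
          have : η ω ^ 2 ≤ e ω ^ 2 - 2 * (mm ω * η ω) := by
            simp only [hη]; nlinarith [sq_nonneg (mm ω)]
          have := mul_le_mul_of_nonneg_left this (hG0 ω)
          simp only; linarith
      _ = ∫ ω, G ω * e ω ^ 2 ∂P := by
          rw [integral_sub hint2 (hint.const_mul 2), integral_const_mul, h0]; ring
  · exact (hei.sub hηi).abs
  · have hce : P[ξ | m] =ᵐ[P] - P[ζ | m] := by
      have h1 : P[e | m] =ᵐ[P] P[ξ | m] + P[ζ | m] := by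
        have : e = ξ + ζ := by ext ω; exact hζe ω
        conv_lhs => rw [this]
        exact condExp_add hξi hζi m
      filter_upwards [h1, hzero] with ω a1 a2
      rw [a2] at a1
      simp only [Pi.zero_apply, Pi.add_apply, Pi.neg_apply] at *
      linarith
    have hζabs : ∀ ω, (if |e ω| ≤ T then 0 else |e ω|) = |ζ ω| := fun ω => by
      simp only [hζ]; split_ifs <;> simp
    simp_rw [hζabs]
    calc ∫ ω, |e ω - η ω| ∂P ≤ ∫ ω, (|ζ ω| + |(P[ζ | m]) ω|) ∂P := by
          refine integral_mono_ae (hei.sub hηi).abs (hζi.abs.add integrable_condExp.abs) ?_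
          filter_upwards [hce, hmmae] with ω a1 a2
          have : e ω - η ω = ζ ω - (P[ζ | m]) ω := by
            rw [hζe ω]; simp only [hη]; rw [a2, a1]; simp
          rw [this]; exact abs_sub _ _
      _ = ∫ ω, |ζ ω| ∂P + ∫ ω, |(P[ζ | m]) ω| ∂P := integral_add hζi.abs integrable_condExp.abs
      _ ≤ 2 * ∫ ω, |ζ ω| ∂P := by linarith [integral_abs_condExp_le (μ := P) (m := m) ζ]

end Martingale

/-! ### Exponential and second moment bounds for martingale transforms -/

section MartingaleSequence

variable {Ω : Type} {mΩ : MeasurableSpace Ω} {P : Measure Ω} {F : ℕ → MeasurableSpace Ω}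

/-- Exponential supermartingale: since `exp x ≤ 1 + x + x²` for `|x| ≤ 1`, compensating by
`v c²` makes the exponential of the martingale transform have mean at most one. -/
lemma integral_exp_le_one [IsProbabilityMeasure P] (hle : ∀ k, F k ≤ mΩ) (hmono : Monotone F)
    {c η : ℕ → Ω → ℝ} {v cb : ℝ} (hv : 0 ≤ v)
    (hc : ∀ k, StronglyMeasurable[F k] (c k)) (hη : ∀ k, StronglyMeasurable[F (k + 1)] (η k))
    (hcb : ∀ k ω, |c k ω| ≤ cb) {hb : ℝ} (hηb : ∀ k ω, |η k ω| ≤ hb)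
    (hsmall : ∀ k ω, |c k ω * η k ω| ≤ 1)
    (horth : ∀ k (G : Ω → ℝ) (B : ℝ), StronglyMeasurable[F k] G → (∀ ω, |G ω| ≤ B) →
        ∫ ω, G ω * η k ω ∂P = 0)
    (hvar : ∀ k (G : Ω → ℝ) (B : ℝ), StronglyMeasurable[F k] G → (∀ ω, 0 ≤ G ω) →
        (∀ ω, |G ω| ≤ B) → ∫ ω, G ω * η k ω ^ 2 ∂P ≤ v * ∫ ω, G ω ∂P) (n : ℕ) :
    Integrable (fun ω => Real.exp (∑ k ∈ Finset.range n, (c k ω * η k ω - v * c k ω ^ 2))) P ∧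
    ∫ ω, Real.exp (∑ k ∈ Finset.range n, (c k ω * η k ω - v * c k ω ^ 2)) ∂P ≤ 1 := by
  have hmeas : ∀ n, StronglyMeasurable[F n]
      (fun ω => ∑ k ∈ Finset.range n, (c k ω * η k ω - v * c k ω ^ 2)) := fun n => by
    refine Finset.stronglyMeasurable_fun_sum _ fun k hk => ?_
    have hk' : k + 1 ≤ n := Finset.mem_range.1 hk
    have h1 := (hc k).mono (hmono ((Nat.le_succ k).trans hk'))
    have h2 := (hη k).mono (hmono hk')
    exact (h1.mul h2).sub ((h1.pow 2).const_mul v)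
  have hUm : ∀ n, StronglyMeasurable[F n]
      (fun ω => Real.exp (∑ k ∈ Finset.range n, (c k ω * η k ω - v * c k ω ^ 2))) := fun n =>
    Real.continuous_exp.comp_stronglyMeasurable (hmeas n)
  have hUb : ∀ n ω, Real.exp (∑ k ∈ Finset.range n, (c k ω * η k ω - v * c k ω ^ 2))
      ≤ Real.exp n := fun n ω => by
    refine Real.exp_le_exp.2 ?_
    calc _ ≤ ∑ k ∈ Finset.range n, (1 : ℝ) := Finset.sum_le_sum fun k _ => by
          have := le_of_abs_le (hsmall k ω)
          nlinarith [mul_nonneg hv (sq_nonneg (c k ω))]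
      _ = n := by simp
  have hUi : ∀ n, Integrable
      (fun ω => Real.exp (∑ k ∈ Finset.range n, (c k ω * η k ω - v * c k ω ^ 2))) P := fun n =>
    Integrable.of_bound ((hUm n).mono (hle n)).aestronglyMeasurable (Real.exp n)
      (Eventually.of_forall fun ω => by
        rw [Real.norm_eq_abs, abs_of_pos (Real.exp_pos _)]; exact hUb n ω)
  refine ⟨hUi n, ?_⟩
  induction n with
  | zero => simp
  | succ n ih =>
    set U : Ω → ℝ :=
      fun ω => Real.exp (∑ k ∈ Finset.range n, (c k ω * η k ω - v * c k ω ^ 2)) with hU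
    set G : Ω → ℝ := fun ω => U ω * Real.exp (-(v * c n ω ^ 2)) with hG
    have hGm : StronglyMeasurable[F n] G :=
      (hUm n).mul (Real.continuous_exp.comp_stronglyMeasurable (((hc n).pow 2).const_mul v).neg)
    have hG0 : ∀ ω, 0 ≤ G ω := fun ω => by positivity
    have hGb : ∀ ω, |G ω| ≤ Real.exp n := fun ω => by
      rw [abs_of_nonneg (hG0 ω)]
      have h1 : Real.exp (-(v * c n ω ^ 2)) ≤ 1 := by
        rw [Real.exp_le_one_iff]; nlinarith [mul_nonneg hv (sq_nonneg (c n ω))]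
      calc G ω ≤ Real.exp n * 1 := mul_le_mul (hUb n ω) h1 (Real.exp_pos _).le (Real.exp_pos _).le
        _ = _ := mul_one _
    have hGcm : StronglyMeasurable[F n] (fun ω => G ω * c n ω) := hGm.mul (hc n)
    have hGcb : ∀ ω, |G ω * c n ω| ≤ Real.exp n * cb := fun ω => by
      rw [abs_mul]; exact mul_le_mul (hGb ω) (hcb n ω) (abs_nonneg _) (Real.exp_pos _).le
    have hGc2m : StronglyMeasurable[F n] (fun ω => G ω * c n ω ^ 2) := hGm.mul ((hc n).pow 2)
    have hGc2b : ∀ ω, |G ω * c n ω ^ 2| ≤ Real.exp n * cb ^ 2 := fun ω => by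
      rw [abs_mul, abs_pow]
      exact mul_le_mul (hGb ω) (pow_le_pow_left₀ (abs_nonneg _) (hcb n ω) 2) (by positivity)
        (Real.exp_pos _).le
    have hae : ∀ {f : Ω → ℝ}, StronglyMeasurable[F n] f → AEStronglyMeasurable f P := fun hf =>
      (hf.mono (hle n)).aestronglyMeasurable
    have hηm : AEStronglyMeasurable (η n) P := ((hη n).mono (hle _)).aestronglyMeasurable
    have hηi : Integrable (η n) P := Integrable.of_bound hηm hb (Eventually.of_forall (hηb n))
    have hη2i : Integrable (fun ω => η n ω ^ 2) P := by
      refine Integrable.of_bound (hηm.pow 2) (hb ^ 2) (Eventually.of_forall fun ω => ?_)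
      rw [Real.norm_eq_abs, abs_pow]
      exact pow_le_pow_left₀ (abs_nonneg _) (hηb n ω) 2
    have i0 : Integrable G P := Integrable.of_bound (hae hGm) _ (Eventually.of_forall hGb)
    have i1 : Integrable (fun ω => G ω * c n ω * η n ω) P :=
      integrable_bdd_mul' (hae hGcm) hGcb hηi
    have i2 : Integrable (fun ω => G ω * c n ω ^ 2 * η n ω ^ 2) P :=
      integrable_bdd_mul' (hae hGc2m) hGc2b hη2i
    have i3 : Integrable (fun ω => G ω * c n ω ^ 2) P :=
      Integrable.of_bound (hae hGc2m) _ (Eventually.of_forall hGc2b)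
    calc ∫ ω, Real.exp (∑ k ∈ Finset.range (n + 1), (c k ω * η k ω - v * c k ω ^ 2)) ∂P
        ≤ ∫ ω, (G ω + G ω * c n ω * η n ω + G ω * c n ω ^ 2 * η n ω ^ 2) ∂P := by
          refine integral_mono (hUi (n + 1)) ((i0.add i1).add i2) fun ω => ?_
          have e1 : Real.exp (∑ k ∈ Finset.range (n + 1), (c k ω * η k ω - v * c k ω ^ 2))
              = G ω * Real.exp (c n ω * η n ω) := by
            rw [Finset.sum_range_succ, hG, hU]
            simp only
            rw [← Real.exp_add, ← Real.exp_add]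
            congr 1; ring
          have e2 := le_of_abs_le (Real.abs_exp_sub_one_sub_id_le (hsmall n ω))
          have e3 : Real.exp (c n ω * η n ω)
              ≤ 1 + c n ω * η n ω + c n ω ^ 2 * η n ω ^ 2 := by
            rw [← mul_pow]; linarith
          simp only [e1]
          have := mul_le_mul_of_nonneg_left e3 (hG0 ω)
          linarith
      _ = ∫ ω, G ω ∂P + ∫ ω, G ω * c n ω * η n ω ∂P
            + ∫ ω, G ω * c n ω ^ 2 * η n ω ^ 2 ∂P := by
          have i01 : Integrable (fun ω => G ω + G ω * c n ω * η n ω) P := i0.add i1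
          rw [integral_add i01 i2, integral_add i0 i1]
      _ ≤ ∫ ω, G ω ∂P + 0 + v * ∫ ω, G ω * c n ω ^ 2 ∂P := by
          rw [horth n _ _ hGcm hGcb]
          have := hvar n _ _ hGc2m (fun ω => mul_nonneg (hG0 ω) (sq_nonneg _)) hGc2b
          linarith
      _ = ∫ ω, (G ω + v * (G ω * c n ω ^ 2)) ∂P := by
          rw [integral_add i0 (i3.const_mul v), integral_const_mul]; ring
      _ ≤ ∫ ω, U ω ∂P := by
          refine integral_mono (i0.add (i3.const_mul v)) (hUi n) fun ω => ?_
          have e1 : 1 + v * c n ω ^ 2 ≤ Real.exp (v * c n ω ^ 2) := by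
            linarith [Real.add_one_le_exp (v * c n ω ^ 2)]
          have e2 := mul_le_mul_of_nonneg_left e1 (hG0 ω)
          have e3 : G ω * Real.exp (v * c n ω ^ 2) = U ω := by
            simp only [hG]
            rw [mul_assoc, ← Real.exp_add, neg_add_cancel, Real.exp_zero, mul_one]
          simp only; linarith
      _ ≤ 1 := ih

/-- One-sided Freedman-type tail bound on the event where `∑ c²` is at most `V`. -/
lemma tail_one_sided [IsProbabilityMeasure P] (hle : ∀ k, F k ≤ mΩ) (hmono : Monotone F)
    {c η : ℕ → Ω → ℝ} {v cb : ℝ} (hv : 0 ≤ v)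
    (hc : ∀ k, StronglyMeasurable[F k] (c k)) (hη : ∀ k, StronglyMeasurable[F (k + 1)] (η k))
    (hcb : ∀ k ω, |c k ω| ≤ cb) {hb : ℝ} (hηb : ∀ k ω, |η k ω| ≤ hb)
    (horth : ∀ k (G : Ω → ℝ) (B : ℝ), StronglyMeasurable[F k] G → (∀ ω, |G ω| ≤ B) →
        ∫ ω, G ω * η k ω ∂P = 0)
    (hvar : ∀ k (G : Ω → ℝ) (B : ℝ), StronglyMeasurable[F k] G → (∀ ω, 0 ≤ G ω) →
        (∀ ω, |G ω| ≤ B) → ∫ ω, G ω * η k ω ^ 2 ∂P ≤ v * ∫ ω, G ω ∂P) (n : ℕ)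
    {l t V : ℝ} (hl : 0 ≤ l) (hlb : l * cb * hb ≤ 1) :
    P.real {ω | t < ∑ k ∈ Finset.range n, c k ω * η k ω ∧
      ∑ k ∈ Finset.range n, c k ω ^ 2 ≤ V} ≤ Real.exp (-(l * t) + l ^ 2 * v * V) := by
  obtain ⟨hi, hI⟩ := integral_exp_le_one (P := P) hle hmono (c := fun k ω => l * c k ω) (η := η)
    (v := v) (cb := l * cb) hv (fun k => (hc k).const_mul l) hη
    (fun k ω => by rw [abs_mul, abs_of_nonneg hl]; exact mul_le_mul_of_nonneg_left (hcb k ω) hl)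
    hηb
    (fun k ω => by
      rw [abs_mul, abs_mul, abs_of_nonneg hl]
      refine le_trans (mul_le_mul (mul_le_mul_of_nonneg_left (hcb k ω) hl) (hηb k ω)
        (abs_nonneg _) ?_) hlb
      exact mul_nonneg hl ((abs_nonneg _).trans (hcb k ω))) horth hvar n
  have hM := mul_meas_ge_le_integral_of_nonneg (μ := P)
    (Eventually.of_forall fun ω => (Real.exp_pos _).le) hi (Real.exp (l * t - l ^ 2 * v * V))
  have hsub : {ω | t < ∑ k ∈ Finset.range n, c k ω * η k ω ∧
      ∑ k ∈ Finset.range n, c k ω ^ 2 ≤ V} ⊆ {ω | Real.exp (l * t - l ^ 2 * v * V) ≤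
        Real.exp (∑ k ∈ Finset.range n, (l * c k ω * η k ω - v * (l * c k ω) ^ 2))} := by
    rintro ω ⟨h1, h2⟩
    refine Real.exp_le_exp.2 ?_
    have e : ∑ k ∈ Finset.range n, (l * c k ω * η k ω - v * (l * c k ω) ^ 2)
        = l * ∑ k ∈ Finset.range n, c k ω * η k ω
          - l ^ 2 * v * ∑ k ∈ Finset.range n, c k ω ^ 2 := by
      rw [Finset.mul_sum, Finset.mul_sum, ← Finset.sum_sub_distrib]
      exact Finset.sum_congr rfl fun k _ => by ring
    rw [e]
    have := mul_le_mul_of_nonneg_left h1.le hl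
    have := mul_le_mul_of_nonneg_left h2 (mul_nonneg (sq_nonneg l) hv)
    linarith
  have h3 := measureReal_mono (μ := P) hsub
  have h4 : Real.exp (-(l * t) + l ^ 2 * v * V) * Real.exp (l * t - l ^ 2 * v * V) = 1 := by
    rw [← Real.exp_add]; simp
  have h5 := Real.exp_pos (-(l * t) + l ^ 2 * v * V)
  refine h3.trans ?_
  have h6 := mul_le_mul_of_nonneg_left (hM.trans hI) h5.le
  rw [← mul_assoc, h4] at h6
  linarith

/-- Two-sided version of `tail_one_sided`. -/
lemma tail_two_sided [IsProbabilityMeasure P] (hle : ∀ k, F k ≤ mΩ) (hmono : Monotone F)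
    {c η : ℕ → Ω → ℝ} {v cb : ℝ} (hv : 0 ≤ v)
    (hc : ∀ k, StronglyMeasurable[F k] (c k)) (hη : ∀ k, StronglyMeasurable[F (k + 1)] (η k))
    (hcb : ∀ k ω, |c k ω| ≤ cb) {hb : ℝ} (hηb : ∀ k ω, |η k ω| ≤ hb)
    (horth : ∀ k (G : Ω → ℝ) (B : ℝ), StronglyMeasurable[F k] G → (∀ ω, |G ω| ≤ B) →
        ∫ ω, G ω * η k ω ∂P = 0)
    (hvar : ∀ k (G : Ω → ℝ) (B : ℝ), StronglyMeasurable[F k] G → (∀ ω, 0 ≤ G ω) →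
        (∀ ω, |G ω| ≤ B) → ∫ ω, G ω * η k ω ^ 2 ∂P ≤ v * ∫ ω, G ω ∂P) (n : ℕ)
    {l t V : ℝ} (hl : 0 ≤ l) (hlb : l * cb * hb ≤ 1) :
    P.real {ω | t < |∑ k ∈ Finset.range n, c k ω * η k ω| ∧
      ∑ k ∈ Finset.range n, c k ω ^ 2 ≤ V} ≤ 2 * Real.exp (-(l * t) + l ^ 2 * v * V) := by
  have h1 := tail_one_sided (P := P) hle hmono hv hc hη hcb hηb horth hvar n (t := t) (V := V) hl hlb
  have h2 := tail_one_sided (P := P) hle hmono hv (c := fun k ω => - c k ω)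
    (fun k => (hc k).neg) hη (fun k ω => by rw [abs_neg]; exact hcb k ω) hηb horth hvar n
    (t := t) (V := V) hl hlb
  have hsub : {ω | t < |∑ k ∈ Finset.range n, c k ω * η k ω| ∧
      ∑ k ∈ Finset.range n, c k ω ^ 2 ≤ V} ⊆
      {ω | t < ∑ k ∈ Finset.range n, c k ω * η k ω ∧ ∑ k ∈ Finset.range n, c k ω ^ 2 ≤ V} ∪
      {ω | t < ∑ k ∈ Finset.range n, - c k ω * η k ω ∧
        ∑ k ∈ Finset.range n, (- c k ω) ^ 2 ≤ V} := by
    rintro ω ⟨ha, hb⟩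
    rcases lt_abs.1 ha with h | h
    · exact Or.inl ⟨h, hb⟩
    · exact Or.inr ⟨by simpa [Finset.sum_neg_distrib] using h, by simpa using hb⟩
  calc _ ≤ _ := measureReal_mono hsub
    _ ≤ _ := measureReal_union_le _ _
    _ ≤ _ := by linarith

/-- Martingale differences are orthogonal in `L²`, also after multiplication by bounded
predictable weights. -/
lemma integral_sum_sq_le [IsProbabilityMeasure P] (hle : ∀ k, F k ≤ mΩ) (hmono : Monotone F)
    {c e : ℕ → Ω → ℝ} {v cb : ℝ}
    (hc : ∀ k, StronglyMeasurable[F k] (c k)) (he : ∀ k, StronglyMeasurable[F (k + 1)] (e k))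
    (hcb : ∀ k ω, |c k ω| ≤ cb)
    (hzero : ∀ k, P[e k | F k] =ᵐ[P] 0) (hsq : ∀ k, Integrable (fun ω => e k ω ^ 2) P)
    (hvar : ∀ k, ∀ᵐ ω ∂P, (P[fun ω => e k ω ^ 2 | F k]) ω ≤ v) (n : ℕ) :
    MemLp (fun ω => ∑ k ∈ Finset.range n, c k ω * e k ω) 2 P ∧
    ∫ ω, (∑ k ∈ Finset.range n, c k ω * e k ω) ^ 2 ∂P
      ≤ v * ∑ k ∈ Finset.range n, ∫ ω, c k ω ^ 2 ∂P := by
  have hae : ∀ k {f : Ω → ℝ}, StronglyMeasurable[F k] f → AEStronglyMeasurable f P := fun k f hf =>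
      (hf.mono (hle k)).aestronglyMeasurable
  have he2 : ∀ k, MemLp (e k) 2 P := fun k =>
    (memLp_two_iff_integrable_sq (hae _ (he k))).2 (hsq k)
  have hce2 : ∀ k, MemLp (fun ω => c k ω * e k ω) 2 P := fun k => by
    have hae1 : AEStronglyMeasurable (fun ω => c k ω * e k ω) P :=
      (hae _ (hc k)).mul (hae _ (he k))
    refine (he2 k).of_le_mul (c := cb) hae1 (Eventually.of_forall fun ω => ?_)
    rw [norm_mul]
    exact mul_le_mul_of_nonneg_right (hcb k ω) (norm_nonneg _)
  have hS2 : ∀ n, MemLp (fun ω => ∑ k ∈ Finset.range n, c k ω * e k ω) 2 P := fun n =>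
    memLp_finsetSum _ fun k _ => hce2 k
  refine ⟨hS2 n, ?_⟩
  induction n with
  | zero => simp
  | succ n ih =>
    set S : Ω → ℝ := fun ω => ∑ k ∈ Finset.range n, c k ω * e k ω with hS
    have hSm : StronglyMeasurable[F n] S := by
      refine Finset.stronglyMeasurable_fun_sum _ fun k hk => ?_
      have hk' : k + 1 ≤ n := Finset.mem_range.1 hk
      exact ((hc k).mono (hmono ((Nat.le_succ k).trans hk'))).mul ((he k).mono (hmono hk'))
    have i1 : Integrable (fun ω => S ω ^ 2) P := (hS2 n).integrable_sq
    have i2 : Integrable (fun ω => S ω * (c n ω * e n ω)) P := (hS2 n).integrable_mul (hce2 n)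
    have i3 : Integrable (fun ω => (c n ω * e n ω) ^ 2) P := (hce2 n).integrable_sq
    have i2' : Integrable (fun ω => S ω * c n ω * e n ω) P := by simpa [mul_assoc] using i2
    have z : ∫ ω, S ω * (c n ω * e n ω) ∂P = 0 := by
      have h := integral_mul_condExp (P := P) (hle n) (hSm.mul (hc n))
        ((he2 n).integrable (by norm_num)) i2'
      have h0 : ∫ ω, (S * c n) ω * (P[e n | F n]) ω ∂P = 0 := by
        rw [integral_eq_zero_of_ae]
        filter_upwards [hzero n] with ω hω
        rw [hω]; simp
      rw [h0] at h
      simpa [mul_assoc] using h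
    have q := integral_mul_sq_le (P := P) (hle n) (hsq n) (hvar n) ((hc n).pow 2)
      (fun ω => sq_nonneg (c n ω)) (B := cb ^ 2) (fun ω => by
        rw [Pi.pow_apply, abs_pow]; exact pow_le_pow_left₀ (abs_nonneg _) (hcb n ω) 2)
    calc ∫ ω, (∑ k ∈ Finset.range (n + 1), c k ω * e k ω) ^ 2 ∂P
        = ∫ ω, (S ω ^ 2 + 2 * (S ω * (c n ω * e n ω)) + (c n ω * e n ω) ^ 2) ∂P := by
          refine integral_congr_ae (Eventually.of_forall fun ω => ?_)
          simp only [Finset.sum_range_succ, hS]; ring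
      _ = ∫ ω, S ω ^ 2 ∂P + ∫ ω, (c n ω * e n ω) ^ 2 ∂P := by
          have i12 : Integrable (fun ω => S ω ^ 2 + 2 * (S ω * (c n ω * e n ω))) P :=
            i1.add (i2.const_mul 2)
          rw [integral_add i12 i3, integral_add i1 (i2.const_mul 2),
            integral_const_mul, z]; ring
      _ ≤ _ := by
          rw [Finset.sum_range_succ, mul_add]
          refine add_le_add ih ?_
          simpa [mul_pow] using q

end MartingaleSequence

/-! ### Grids, gradients and orthonormalized bases -/

section Basis

/-- A vector-valued map with gradient bounded by `D` is `D`-Lipschitz in Euclidean norms, tested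
against a fixed direction `β`. -/
lemma abs_dot_sub_le_of_grad {d J : ℕ} {f : (Fin d → ℝ) → Fin J → ℝ} {D : ℝ}
    (hf : ∀ y, ∃ L : (Fin d → ℝ) →L[ℝ] (Fin J → ℝ),
      HasFDerivAt f L y ∧ ∀ u : Fin d → ℝ, eucNorm (L u) ≤ D * eucNorm u)
    (β : Fin J → ℝ) (y z : Fin d → ℝ) :
    |f y ⬝ᵥ β - f z ⬝ᵥ β| ≤ D * eucNorm (y - z) * eucNorm β := by
  choose L hL hLb using hf
  have hpath : ∀ t : ℝ, HasDerivAt (fun t : ℝ => z + t • (y - z)) (y - z) t := fun t => by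
    simpa using ((hasDerivAt_id t).smul_const (y - z)).const_add z
  have hder : ∀ t : ℝ, HasDerivAt (fun t : ℝ => f (z + t • (y - z)) ⬝ᵥ β)
      (L (z + t • (y - z)) (y - z) ⬝ᵥ β) t := fun t => by
    have h1 := (hL (z + t • (y - z))).comp_hasDerivAt t (hpath t)
    have h2 := hasDerivAt_pi.1 h1
    simp only [dotProduct]
    exact HasDerivAt.fun_sum fun j _ => (h2 j).mul_const (β j)
  have h := norm_image_sub_le_of_norm_deriv_le_segment_01'
    (f := fun t : ℝ => f (z + t • (y - z)) ⬝ᵥ β) (C := D * eucNorm (y - z) * eucNorm β)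
    (fun t _ => (hder t).hasDerivWithinAt)
    (fun t _ => (abs_dot_le _ _).trans (mul_le_mul_of_nonneg_right (hLb _ _) (eucNorm_nonneg _)))
  simpa using h

/-- The grid point with coordinates `p j / N`. -/
def gridPt {d : ℕ} (N : ℕ) (p : Fin d → Fin (N + 1)) : Fin d → ℝ := fun j => (p j : ℝ) / N

lemma exists_gridPt {d N : ℕ} (hN : 0 < N) {y : Fin d → ℝ}
    (hy : y ∈ Set.Icc (0 : Fin d → ℝ) 1) :
    ∃ p : Fin d → Fin (N + 1), eucNorm (y - gridPt N p) ≤ Real.sqrt d / N := by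
  have hN' : (0 : ℝ) < N := by exact_mod_cast hN
  have hfl : ∀ j, ⌊(N : ℝ) * y j⌋₊ < N + 1 := fun j => by
    refine Nat.lt_succ_of_le (Nat.floor_le_of_le ?_)
    have := hy.2 j
    simp only [Pi.one_apply] at this
    nlinarith
  refine ⟨fun j => ⟨⌊(N : ℝ) * y j⌋₊, hfl j⟩, ?_⟩
  have hcoord : ∀ j, |y j - (⌊(N : ℝ) * y j⌋₊ : ℝ) / N| ≤ 1 / N := fun j => by
    have h0 : 0 ≤ (N : ℝ) * y j := mul_nonneg hN'.le (hy.1 j)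
    have h1 := Nat.floor_le h0
    have h2 := Nat.lt_floor_add_one ((N : ℝ) * y j)
    have e : y j - (⌊(N : ℝ) * y j⌋₊ : ℝ) / N = ((N : ℝ) * y j - ⌊(N : ℝ) * y j⌋₊) / N := by
      field_simp
    rw [e, abs_div, abs_of_pos hN', abs_of_nonneg (by linarith)]
    gcongr
    linarith
  have : (Real.sqrt d / N) = Real.sqrt (d * (1 / N) ^ 2) := by
    rw [Real.sqrt_mul (Nat.cast_nonneg d), Real.sqrt_sq (by positivity)]; ring
  rw [this]
  refine Real.sqrt_le_sqrt ?_
  calc _ ≤ ∑ _j : Fin d, (1 / (N : ℝ)) ^ 2 := Finset.sum_le_sum fun j _ => by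
        rw [← sq_abs]
        exact pow_le_pow_left₀ (abs_nonneg _) (hcoord j) 2
    _ = _ := by simp

lemma posDef_transpose {m : ℕ} {R : Matrix (Fin m) (Fin m) ℝ} (hR : R.PosDef) : Rᵀ = R := by
  have := hR.1
  simpa [Matrix.IsHermitian, conjTranspose_eq_transpose_of_trivial] using this

lemma posDef_mul_inv {m : ℕ} {R : Matrix (Fin m) (Fin m) ℝ} (hR : R.PosDef) : R * R⁻¹ = 1 :=
  mul_nonsing_inv _ ((isUnit_iff_isUnit_det _).1 hR.isUnit)

/-- Orthonormalization by a square root of a Gram matrix with smallest eigenvalue at least `lam`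
increases Euclidean norms by at most `lam^{-1/2}`. -/
lemma eucNorm_inv_sqrt_le {m : ℕ} {R G : Matrix (Fin m) (Fin m) ℝ} (hR : R.PosDef)
    (hRG : R * R = G) {lam : ℝ} (hlam : 0 < lam)
    (hG : ∀ v : Fin m → ℝ, lam * (∑ j, v j ^ 2) ≤ v ⬝ᵥ G *ᵥ v) (w : Fin m → ℝ) :
    eucNorm (R⁻¹ *ᵥ w) ≤ (Real.sqrt lam)⁻¹ * eucNorm w := by
  set u := R⁻¹ *ᵥ w with hu
  have hRu : R *ᵥ u = w := by rw [hu, mulVec_mulVec, posDef_mul_inv hR, one_mulVec]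
  have h := hG u
  have e : ∑ j, u j ^ 2 = eucNorm u ^ 2 := by rw [eucNorm_sq]; simp [dotProduct, sq]
  rw [← hRG, ← mulVec_mulVec, dot_mulVec_transpose, posDef_transpose hR, hRu, ← eucNorm_sq, e] at h
  rw [le_inv_mul_iff₀ (Real.sqrt_pos.2 hlam)]
  refine abs_le_of_sq_le_sq' ?_ (eucNorm_nonneg _) |>.2
  rw [mul_pow, Real.sq_sqrt hlam.le]
  exact h

variable {Ω : Type} {mΩ : MeasurableSpace Ω} {P : Measure Ω}

lemma integrable_coord_mul [IsProbabilityMeasure P] {m m' : ℕ} {φ : Ω → Fin m → ℝ}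
    {χ : Ω → Fin m' → ℝ} (hφ : Measurable φ) (hχ : Measurable χ) {B B' : ℝ}
    (hφB : ∀ ω, eucNorm (φ ω) ≤ B) (hχB : ∀ ω, eucNorm (χ ω) ≤ B') (u : Fin m → ℝ)
    (v : Fin m' → ℝ) : Integrable (fun ω => (u ⬝ᵥ φ ω) * (v ⬝ᵥ χ ω)) P := by
  have h1 : Measurable fun ω => u ⬝ᵥ φ ω := by
    simp only [dotProduct]
    exact Finset.measurable_sum _ fun j _ => ((measurable_pi_apply j).comp hφ).const_mul _
  have h2 : Measurable fun ω => v ⬝ᵥ χ ω := by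
    simp only [dotProduct]
    exact Finset.measurable_sum _ fun j _ => ((measurable_pi_apply j).comp hχ).const_mul _
  refine Integrable.of_bound (h1.mul h2).aestronglyMeasurable
    ((eucNorm u * B) * (eucNorm v * B')) (Eventually.of_forall fun ω => ?_)
  rw [norm_mul]
  exact mul_le_mul ((abs_dot_le _ _).trans (mul_le_mul_of_nonneg_left (hφB ω) (eucNorm_nonneg _)))
    ((abs_dot_le _ _).trans (mul_le_mul_of_nonneg_left (hχB ω) (eucNorm_nonneg _)))
    (norm_nonneg _)
    (mul_nonneg (eucNorm_nonneg _) ((eucNorm_nonneg _).trans (hφB ω)))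

/-- The bilinear form of a cross moment matrix. -/
lemma integral_dot_mul_dot [IsProbabilityMeasure P] {m m' : ℕ} {φ : Ω → Fin m → ℝ}
    {χ : Ω → Fin m' → ℝ} (hφ : Measurable φ) (hχ : Measurable χ) {B B' : ℝ}
    (hφB : ∀ ω, eucNorm (φ ω) ≤ B) (hχB : ∀ ω, eucNorm (χ ω) ≤ B')
    {S : Matrix (Fin m) (Fin m') ℝ} (hS : S = Matrix.of fun j k => ∫ ω, φ ω j * χ ω k ∂P)
    (u : Fin m → ℝ) (v : Fin m' → ℝ) :
    ∫ ω, (u ⬝ᵥ φ ω) * (v ⬝ᵥ χ ω) ∂P = u ⬝ᵥ S *ᵥ v := by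
  have hi : ∀ j k, Integrable (fun ω => φ ω j * χ ω k) P := fun j k => by
    have := integrable_coord_mul (P := P) hφ hχ hφB hχB (Pi.single j 1) (Pi.single k 1)
    simpa using this
  have e : ∀ ω, (u ⬝ᵥ φ ω) * (v ⬝ᵥ χ ω) = ∑ j, ∑ k, u j * v k * (φ ω j * χ ω k) := fun ω => by
    simp only [dotProduct, Finset.sum_mul_sum]
    exact Finset.sum_congr rfl fun j _ => Finset.sum_congr rfl fun k _ => by ring
  simp_rw [e]
  rw [integral_finsetSum _ fun j _ => integrable_finsetSum _ fun k _ => (hi j k).const_mul _]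
  simp only [dotProduct, mulVec, Finset.mul_sum]
  refine Finset.sum_congr rfl fun j _ => ?_
  rw [integral_finsetSum _ fun k _ => (hi j k).const_mul _]
  refine Finset.sum_congr rfl fun k _ => ?_
  rw [integral_const_mul, hS]
  simp only [of_apply]; ring

/-- The orthonormalized basis is orthonormal in `L²`. -/
lemma integral_orthonormal_sq [IsProbabilityMeasure P] {m : ℕ} {φ : Ω → Fin m → ℝ}
    (hφ : Measurable φ) {B : ℝ} (hφB : ∀ ω, eucNorm (φ ω) ≤ B)
    {R G : Matrix (Fin m) (Fin m) ℝ} (hR : R.PosDef) (hRG : R * R = G)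
    (hG : G = Matrix.of fun j k => ∫ ω, φ ω j * φ ω k ∂P) (v : Fin m → ℝ) :
    ∫ ω, (v ⬝ᵥ R⁻¹ *ᵥ φ ω) * (v ⬝ᵥ R⁻¹ *ᵥ φ ω) ∂P = eucNorm v ^ 2 := by
  have hT : (R⁻¹)ᵀ = R⁻¹ := by rw [transpose_nonsing_inv, posDef_transpose hR]
  simp_rw [dot_mulVec_transpose, hT]
  rw [integral_dot_mul_dot hφ hφ hφB hφB hG, ← hRG, ← mulVec_mulVec, dot_mulVec_transpose,
    posDef_transpose hR, mulVec_mulVec, posDef_mul_inv hR, one_mulVec, eucNorm_sq]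

/-- The cross moment matrix of two `L²`-orthonormal systems is a contraction, so its smallest
singular value is at most one. -/
lemma minSingVal_le_one [IsProbabilityMeasure P] {m m' : ℕ} {φ : Ω → Fin m → ℝ}
    {χ : Ω → Fin m' → ℝ} (hφ : Measurable φ) (hχ : Measurable χ) {B B' : ℝ}
    (hφB : ∀ ω, eucNorm (φ ω) ≤ B) (hχB : ∀ ω, eucNorm (χ ω) ≤ B')
    (hφ1 : ∀ v, ∫ ω, (v ⬝ᵥ φ ω) * (v ⬝ᵥ φ ω) ∂P = eucNorm v ^ 2)
    (hχ1 : ∀ v, ∫ ω, (v ⬝ᵥ χ ω) * (v ⬝ᵥ χ ω) ∂P = eucNorm v ^ 2)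
    {S : Matrix (Fin m) (Fin m') ℝ} (hS : S = Matrix.of fun j k => ∫ ω, φ ω j * χ ω k ∂P)
    (hm : 0 < m) : minSingVal S ≤ 1 := by
  set v : Fin m → ℝ := Pi.single ⟨0, hm⟩ 1
  have hv : eucNorm v = 1 := by
    have : eucNorm v ^ 2 = 1 := by rw [eucNorm_sq]; simp [v]
    exact (pow_eq_one_iff_of_nonneg (eucNorm_nonneg v) two_ne_zero).1 this
  set u := Sᵀ *ᵥ v with hu
  have h1 : eucNorm u ^ 2 = ∫ ω, (v ⬝ᵥ φ ω) * (u ⬝ᵥ χ ω) ∂P := by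
    rw [integral_dot_mul_dot hφ hχ hφB hχB hS, dot_mulVec_transpose, ← hu, eucNorm_sq]
  have i1 := integrable_coord_mul (P := P) hφ hφ hφB hφB v v
  have i2 := integrable_coord_mul (P := P) hχ hχ hχB hχB u u
  have i3 := integrable_coord_mul (P := P) hφ hχ hφB hχB v u
  have h2 : 2 * ∫ ω, (v ⬝ᵥ φ ω) * (u ⬝ᵥ χ ω) ∂P ≤ eucNorm v ^ 2 + eucNorm u ^ 2 := by
    rw [← hφ1 v, ← hχ1 u, ← integral_add i1 i2, ← integral_const_mul]
    refine integral_mono (i3.const_mul 2) (i1.add i2) fun ω => ?_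
    simp only []
    nlinarith [sq_nonneg (v ⬝ᵥ φ ω - u ⬝ᵥ χ ω)]
  have h3 := minSingVal_mul_le S v
  rw [hv, mul_one, ← hu] at h3
  rw [← h1, hv] at h2
  nlinarith [eucNorm_nonneg u]

end Basis

/-! ### The estimate on one realization -/

section Deterministic

/-- The deterministic part of the argument, on one realization.  Write `q y` for the coefficients
with `ψ̃ y ⬝ L w = q y ⬝ w`, where `L = (S Sᵀ)⁻¹ S`.  At a grid point `q ⬝ w` is a martingale
average, controlled by `t` after exchanging the errors `e` for the truncated ones `η`; moving from
the grid to `y` costs a gradient term, and exchanging `L` for its sample version a perturbation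
term. -/
lemma det_bound {d J K n N : ℕ} (hn : 0 < n) (hN : 0 < N) {σ D Bf Bx t V R : ℝ} (hσ : 0 < σ)
    (hσ1 : σ ≤ 1) {f : (Fin d → ℝ) → Fin J → ℝ} (hD : 0 ≤ D)
    (hf : ∀ y, ∃ L : (Fin d → ℝ) →L[ℝ] (Fin J → ℝ),
      HasFDerivAt f L y ∧ ∀ u : Fin d → ℝ, eucNorm (L u) ≤ D * eucNorm u)
    (hfB : ∀ y, eucNorm (f y) ≤ Bf) {x : ℕ → Fin K → ℝ} (hx : ∀ k, eucNorm (x k) ≤ Bx)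
    (e η : ℕ → ℝ) {S Sh : Matrix (Fin J) (Fin K) ℝ} {A : Matrix (Fin K) (Fin K) ℝ}
    (hS : ∀ v, σ * eucNorm v ≤ eucNorm (Sᵀ *ᵥ v))
    (hA : A = Matrix.of fun k k' => (1 / n : ℝ) * ∑ i ∈ Finset.range n, x i k * x i k')
    {w : Fin K → ℝ} (hw : w = fun k => (1 / n : ℝ) * ∑ i ∈ Finset.range n, x i k * e i)
    (hsmall : σ⁻¹ * (specNorm (A - 1) + specNorm (Sh - S)) ≤ 1 / 2)
    (hV : 2 * n * (σ⁻¹ * Bf) ^ 2 ≤ V)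
    (hgrid : ∀ p : Fin d → Fin (N + 1),
      ¬ (t < |∑ i ∈ Finset.range n, ((((S * Sᵀ)⁻¹ * S)ᵀ *ᵥ f (gridPt N p)) ⬝ᵥ x i) * η i| ∧
        ∑ i ∈ Finset.range n, ((((S * Sᵀ)⁻¹ * S)ᵀ *ᵥ f (gridPt N p)) ⬝ᵥ x i) ^ 2 ≤ V))
    (hdiff : ∑ i ∈ Finset.range n, |e i - η i| ≤ R)
    {y : Fin d → ℝ} (hy : y ∈ Set.Icc (0 : Fin d → ℝ) 1) :
    |f y ⬝ᵥ (((Sh * A⁻¹ * Shᵀ)⁻¹ * Sh * A⁻¹) *ᵥ w)|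
      ≤ (1 / n) * (t + σ⁻¹ * Bf * Bx * R) + D * (Real.sqrt d / N) * (σ⁻¹ * eucNorm w)
        + Bf * (10 * σ⁻¹ * (σ⁻¹ * (specNorm (A - 1) + specNorm (Sh - S))) * eucNorm w) := by
  set L := (S * Sᵀ)⁻¹ * S with hL
  set a := specNorm (A - 1) with ha
  set s := specNorm (Sh - S) with hs
  have hn' : (0 : ℝ) < n := by exact_mod_cast hn
  have ha0 : 0 ≤ a := specNorm_nonneg _
  have hs0 : 0 ≤ s := specNorm_nonneg _
  have hσi : 0 < σ⁻¹ := inv_pos.2 hσ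
  have hw0 := eucNorm_nonneg w
  have hBf : 0 ≤ Bf := (eucNorm_nonneg _).trans (hfB y)
  have hBx : 0 ≤ Bx := (eucNorm_nonneg _).trans (hx 0)
  have ha1 : a ≤ 1 := by
    rw [inv_mul_le_iff₀ hσ] at hsmall
    nlinarith
  obtain ⟨p, hp⟩ := exists_gridPt hN hy
  set z := gridPt N p with hz
  set q := Lᵀ *ᵥ f z with hq
  have hqn : eucNorm q ≤ σ⁻¹ * Bf :=
    (eucNorm_transpose_mulVec_le L hσi.le (popCoef_norm_le hσ hS) (f z)).trans
      (mul_le_mul_of_nonneg_left (hfB z) hσi.le)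
  -- the quadratic variation at the grid point
  have hquad : ∑ i ∈ Finset.range n, (q ⬝ᵥ x i) ^ 2 = n * (q ⬝ᵥ A *ᵥ q) := by
    have e1 : ∀ i, (q ⬝ᵥ x i) ^ 2 = ∑ k, ∑ k', q k * q k' * (x i k * x i k') := fun i => by
      simp only [dotProduct, sq, Finset.sum_mul_sum]
      exact Finset.sum_congr rfl fun j _ => Finset.sum_congr rfl fun k _ => by ring
    simp_rw [e1]
    rw [Finset.sum_comm, hA]
    simp only [dotProduct, mulVec, Matrix.of_apply, Finset.mul_sum]
    refine Finset.sum_congr rfl fun k _ => ?_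
    rw [Finset.sum_comm]
    refine Finset.sum_congr rfl fun k' _ => ?_
    rw [Finset.sum_mul, Finset.mul_sum, Finset.mul_sum]
    refine Finset.sum_congr rfl fun i _ => ?_
    field_simp
  have hqA : q ⬝ᵥ A *ᵥ q ≤ 2 * eucNorm q ^ 2 := by
    have e1 : A *ᵥ q = q + (A - 1) *ᵥ q := by rw [sub_mulVec, one_mulVec]; abel
    rw [e1, dotProduct_add, ← eucNorm_sq]
    have := dot_le q ((A - 1) *ᵥ q)
    have h2 := eucNorm_mulVec_le (A - 1) q
    have h3 := eucNorm_nonneg q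
    nlinarith [mul_nonneg h3 h3, mul_le_mul_of_nonneg_left h2 h3]
  have hVq : ∑ i ∈ Finset.range n, (q ⬝ᵥ x i) ^ 2 ≤ V := by
    rw [hquad]
    refine le_trans ?_ hV
    have h2 : eucNorm q ^ 2 ≤ (σ⁻¹ * Bf) ^ 2 := pow_le_pow_left₀ (eucNorm_nonneg q) hqn 2
    nlinarith
  have hη : |∑ i ∈ Finset.range n, (q ⬝ᵥ x i) * η i| ≤ t := by
    by_contra hcon
    exact hgrid p ⟨not_le.1 hcon, hVq⟩
  -- the value at the grid point
  have h1 : |f z ⬝ᵥ (L *ᵥ w)| ≤ (1 / n) * (t + σ⁻¹ * Bf * Bx * R) := by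
    have e1 : f z ⬝ᵥ (L *ᵥ w) = (1 / n) * (∑ i ∈ Finset.range n, (q ⬝ᵥ x i) * η i
        + ∑ i ∈ Finset.range n, (q ⬝ᵥ x i) * (e i - η i)) := by
      rw [dot_mulVec_transpose, ← hq, ← Finset.sum_add_distrib, hw]
      simp only [dotProduct, Finset.mul_sum, Finset.sum_mul]
      rw [Finset.sum_comm]
      refine Finset.sum_congr rfl fun i _ => ?_
      rw [← Finset.sum_add_distrib, Finset.mul_sum]
      refine Finset.sum_congr rfl fun k _ => ?_
      ring
    rw [e1, abs_mul, abs_of_nonneg (by positivity : (0 : ℝ) ≤ 1 / n)]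
    refine mul_le_mul_of_nonneg_left ((abs_add_le _ _).trans (add_le_add hη ?_)) (by positivity)
    calc |∑ i ∈ Finset.range n, (q ⬝ᵥ x i) * (e i - η i)|
        ≤ ∑ i ∈ Finset.range n, |(q ⬝ᵥ x i) * (e i - η i)| := Finset.abs_sum_le_sum_abs _ _
      _ ≤ ∑ i ∈ Finset.range n, σ⁻¹ * Bf * Bx * |e i - η i| := by
          refine Finset.sum_le_sum fun i _ => ?_
          rw [abs_mul]
          refine mul_le_mul_of_nonneg_right ((abs_dot_le _ _).trans ?_) (abs_nonneg _)
          exact mul_le_mul hqn (hx i) (eucNorm_nonneg _) (by positivity)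
      _ = σ⁻¹ * Bf * Bx * ∑ i ∈ Finset.range n, |e i - η i| := by rw [Finset.mul_sum]
      _ ≤ _ := mul_le_mul_of_nonneg_left hdiff (by positivity)
  -- from the grid point to `y`
  have h2 : |f y ⬝ᵥ (L *ᵥ w) - f z ⬝ᵥ (L *ᵥ w)|
      ≤ D * (Real.sqrt d / N) * (σ⁻¹ * eucNorm w) := by
    refine (abs_dot_sub_le_of_grad hf (L *ᵥ w) y z).trans ?_
    exact mul_le_mul (mul_le_mul_of_nonneg_left hp hD) (popCoef_norm_le hσ hS w)
      (eucNorm_nonneg _) (by positivity)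
  -- from the population to the sample coefficients
  have h3 : |f y ⬝ᵥ (((Sh * A⁻¹ * Shᵀ)⁻¹ * Sh * A⁻¹) *ᵥ w - L *ᵥ w)|
      ≤ Bf * (10 * σ⁻¹ * (σ⁻¹ * (a + s)) * eucNorm w) := by
    refine (abs_dot_le _ _).trans (mul_le_mul (hfB y) ?_ (eucNorm_nonneg _) hBf)
    exact coef_perturb hσ hσ1 hS ha0 hs0 (eucNorm_mulVec_le _) (eucNorm_mulVec_le _) hsmall w
  rw [dotProduct_sub] at h3
  rw [abs_le] at h1 h2 h3 ⊢
  constructor <;> linarith [h1.1, h1.2, h2.1, h2.2, h3.1, h3.2]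

end Deterministic

/-! ### Rates and probability bounds -/

section Probability

variable {Ω : Type} {mΩ : MeasurableSpace Ω} {P : Measure Ω}

/-- The truncation level `T = (n / log n)^{1/(2+δ)}` grows slowly enough for the exponential
inequality and fast enough for the truncation bias. -/
lemma rate_bounds {n K C δ : ℝ} (hδ : 0 < δ) (hC : 0 < C) (hn : 0 < n) (hl : 0 < Real.log n)
    (hK0 : 0 ≤ K) (hK : K ≤ C * (n / Real.log n) ^ (δ / (2 + δ))) :
    (n / Real.log n) ^ (1 / (2 + δ)) * Real.sqrt (K * Real.log n / n) ≤ Real.sqrt C ∧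
    K * ((n / Real.log n) ^ (1 / (2 + δ))) ^ (-(1 + δ))
      ≤ Real.sqrt C * Real.sqrt (K * Real.log n / n) := by
  set x := n / Real.log n with hx
  have hx0 : 0 < x := div_pos hn hl
  have h2 : (0 : ℝ) < 2 + δ := by linarith
  have er : K * Real.log n / n = K * x⁻¹ := by rw [hx, inv_div, mul_div_assoc]
  rw [er]
  constructor
  · refine Real.le_sqrt_of_sq_le ?_
    rw [mul_pow, Real.sq_sqrt (by positivity), ← Real.rpow_natCast, ← Real.rpow_mul hx0.le]
    calc x ^ (1 / (2 + δ) * ((2 : ℕ) : ℝ)) * (K * x⁻¹)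
        ≤ x ^ (1 / (2 + δ) * ((2 : ℕ) : ℝ)) * (C * x ^ (δ / (2 + δ)) * x⁻¹) := by gcongr
      _ = C * (x ^ (1 / (2 + δ) * ((2 : ℕ) : ℝ)) * x ^ (δ / (2 + δ)) * x ^ (-1 : ℝ)) := by
          rw [Real.rpow_neg_one]; ring
      _ = C := by
          rw [← Real.rpow_add hx0, ← Real.rpow_add hx0]
          have : 1 / (2 + δ) * ((2 : ℕ) : ℝ) + δ / (2 + δ) + -1 = 0 := by
            push_cast; field_simp; ring
          rw [this, Real.rpow_zero, mul_one]
  · rw [← Real.sqrt_mul hC.le]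
    refine Real.le_sqrt_of_sq_le ?_
    rw [mul_pow, ← Real.rpow_mul hx0.le, ← Real.rpow_natCast (x ^ _), ← Real.rpow_mul hx0.le]
    calc K ^ 2 * x ^ (1 / (2 + δ) * -(1 + δ) * ((2 : ℕ) : ℝ))
        = K * (K * x ^ (1 / (2 + δ) * -(1 + δ) * ((2 : ℕ) : ℝ))) := by ring
      _ ≤ K * ((C * x ^ (δ / (2 + δ))) * x ^ (1 / (2 + δ) * -(1 + δ) * ((2 : ℕ) : ℝ))) := by
          gcongr
      _ = C * (K * (x ^ (δ / (2 + δ)) * x ^ (1 / (2 + δ) * -(1 + δ) * ((2 : ℕ) : ℝ)))) := by ring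
      _ = C * (K * x⁻¹) := by
          rw [← Real.rpow_add hx0]
          have : δ / (2 + δ) + 1 / (2 + δ) * -(1 + δ) * ((2 : ℕ) : ℝ) = -1 := by
            push_cast; field_simp; ring
          rw [this, Real.rpow_neg_one]

lemma measureReal_lt_le_div [IsProbabilityMeasure P] {Z : Ω → ℝ} (hZ : ∀ ω, 0 ≤ Z ω)
    (hi : Integrable Z P) {R m : ℝ} (hR : 0 < R) (hm : ∫ ω, Z ω ∂P ≤ m) :
    P.real {ω | R < Z ω} ≤ m / R := by
  have h := mul_meas_ge_le_integral_of_nonneg (μ := P) (Eventually.of_forall hZ) hi R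
  rw [le_div_iff₀ hR, mul_comm]
  refine le_trans ?_ (h.trans hm)
  refine mul_le_mul_of_nonneg_left (measureReal_mono fun ω hω => ?_) hR.le
  exact (show R < Z ω from hω).le

/-- The truncated tail is of order `T^{-(1+δ)}` by the moment of order `2 + δ`. -/
lemma integral_tail_le [IsProbabilityMeasure P] {e : Ω → ℝ} {T δ : ℝ} (hT : 0 < T) (hδ : 0 < δ)
    (hi : Integrable (fun ω => |e ω| ^ (2 + δ)) P) :
    ∫ ω, (if |e ω| ≤ T then 0 else |e ω|) ∂P ≤ T ^ (-(1 + δ)) * ∫ ω, |e ω| ^ (2 + δ) ∂P := by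
  rw [← integral_const_mul]
  have hpt : ∀ ω, (if |e ω| ≤ T then 0 else |e ω|) ≤ T ^ (-(1 + δ)) * |e ω| ^ (2 + δ) := fun ω => by
    split_ifs with h
    · positivity
    · have h' : T < |e ω| := not_le.1 h
      have h0 : 0 < |e ω| := hT.trans h'
      have e1 : |e ω| = |e ω| ^ (-(1 + δ)) * |e ω| ^ (2 + δ) := by
        rw [← Real.rpow_add h0]
        have : -(1 + δ) + (2 + δ) = 1 := by ring
        rw [this, Real.rpow_one]
      conv_lhs => rw [e1]
      refine mul_le_mul_of_nonneg_right ?_ (by positivity)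
      exact Real.rpow_le_rpow_of_nonpos hT h'.le (by linarith)
  refine integral_mono_of_nonneg (Eventually.of_forall fun ω => ?_) (hi.const_mul _)
    (Eventually.of_forall hpt)
  simp only [Pi.zero_apply]
  split_ifs <;> positivity

variable {F : ℕ → MeasurableSpace Ω}

/-- Markov's inequality for the Euclidean norm of `n⁻¹ ∑ xᵢ eᵢ`, a martingale in `ℝ^K`. -/
lemma prob_eucNorm_avg_le [IsProbabilityMeasure P] (hle : ∀ k, F k ≤ mΩ) (hmono : Monotone F)
    {K n : ℕ} (hn : 0 < n) {x : ℕ → Ω → Fin K → ℝ} {e : ℕ → Ω → ℝ} {v Bx R : ℝ} (hv : 0 ≤ v)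
    (hx : ∀ k j, StronglyMeasurable[F k] fun ω => x k ω j)
    (he : ∀ k, StronglyMeasurable[F (k + 1)] (e k)) (hxB : ∀ k ω, eucNorm (x k ω) ≤ Bx)
    (hzero : ∀ k, P[e k | F k] =ᵐ[P] 0) (hsq : ∀ k, Integrable (fun ω => e k ω ^ 2) P)
    (hvar : ∀ k, ∀ᵐ ω ∂P, (P[fun ω => e k ω ^ 2 | F k]) ω ≤ v) (hR : 0 < R) :
    P.real {ω | R < eucNorm fun j => (1 / n : ℝ) * ∑ i ∈ Finset.range n, x i ω j * e i ω}
      ≤ v * Bx ^ 2 / n / R ^ 2 := by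
  have hn' : (0 : ℝ) < n := by exact_mod_cast hn
  have hcoord : ∀ k ω j, |x k ω j| ≤ Bx := fun k ω j => by
    refine le_trans (Real.abs_le_sqrt ?_) (hxB k ω)
    exact Finset.single_le_sum (f := fun j => x k ω j ^ 2) (fun _ _ => sq_nonneg _)
      (Finset.mem_univ j)
  have hmain := fun j => integral_sum_sq_le (P := P) hle hmono (c := fun k ω => x k ω j)
    (fun k => hx k j) he (fun k ω => hcoord k ω j) hzero hsq hvar n
  have hi : ∀ j, Integrable
      (fun ω => ((1 / n : ℝ) * ∑ i ∈ Finset.range n, x i ω j * e i ω) ^ 2) P := fun j => by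
    have := (hmain j).1.integrable_sq.const_mul ((1 / n : ℝ) ^ 2)
    simpa only [mul_pow] using this
  have hxi : ∀ k j, Integrable (fun ω => x k ω j ^ 2) P := fun k j => by
    refine Integrable.of_bound (((hx k j).mono (hle k)).pow 2).aestronglyMeasurable (Bx ^ 2)
      (Eventually.of_forall fun ω => ?_)
    rw [Real.norm_eq_abs, abs_pow]
    exact pow_le_pow_left₀ (abs_nonneg _) (hcoord k ω j) 2
  have hI : ∫ ω, ∑ j, ((1 / n : ℝ) * ∑ i ∈ Finset.range n, x i ω j * e i ω) ^ 2 ∂P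
      ≤ v * Bx ^ 2 / n := by
    rw [integral_finsetSum _ fun j _ => hi j]
    calc ∑ j, ∫ ω, ((1 / n : ℝ) * ∑ i ∈ Finset.range n, x i ω j * e i ω) ^ 2 ∂P
        ≤ ∑ j, (1 / n : ℝ) ^ 2 * (v * ∑ k ∈ Finset.range n, ∫ ω, x k ω j ^ 2 ∂P) := by
          refine Finset.sum_le_sum fun j _ => ?_
          simp only [mul_pow]
          rw [integral_const_mul]
          exact mul_le_mul_of_nonneg_left (hmain j).2 (by positivity)
      _ = (1 / n : ℝ) ^ 2 * (v * ∑ k ∈ Finset.range n, ∫ ω, ∑ j, x k ω j ^ 2 ∂P) := by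
          rw [← Finset.mul_sum, ← Finset.mul_sum, Finset.sum_comm]
          congr 2
          exact Finset.sum_congr rfl fun k _ => (integral_finsetSum _ fun j _ => hxi k j).symm
      _ ≤ (1 / n : ℝ) ^ 2 * (v * ∑ k ∈ Finset.range n, Bx ^ 2) := by
          refine mul_le_mul_of_nonneg_left (mul_le_mul_of_nonneg_left
            (Finset.sum_le_sum fun k _ => ?_) hv) (by positivity)
          have : ∀ ω, ∑ j, x k ω j ^ 2 ≤ Bx ^ 2 := fun ω => by
            have h := pow_le_pow_left₀ (eucNorm_nonneg _) (hxB k ω) 2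
            rwa [eucNorm, Real.sq_sqrt (Finset.sum_nonneg fun _ _ => sq_nonneg _)] at h
          calc ∫ ω, ∑ j, x k ω j ^ 2 ∂P ≤ ∫ _, Bx ^ 2 ∂P :=
                integral_mono (integrable_finsetSum _ fun j _ => hxi k j) (integrable_const _) this
            _ = Bx ^ 2 := by simp
      _ = v * Bx ^ 2 / n := by
          rw [Finset.sum_const, Finset.card_range, nsmul_eq_mul]
          field_simp
  refine le_trans (measureReal_mono fun ω hω => ?_) (measureReal_lt_le_div (P := P)
    (Z := fun ω => ∑ j, ((1 / n : ℝ) * ∑ i ∈ Finset.range n, x i ω j * e i ω) ^ 2)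
    (fun ω => Finset.sum_nonneg fun _ _ => sq_nonneg _)
    (integrable_finsetSum _ fun j _ => hi j) (pow_pos hR 2) hI)
  exact (Real.lt_sqrt hR.le).1 hω

/-- Markov's inequality for the accumulated truncation error. -/
lemma prob_sum_diff_le [IsProbabilityMeasure P] {n : ℕ} (hn : 0 < n) {D : ℕ → Ω → ℝ}
    (hD0 : ∀ k ω, 0 ≤ D k ω) (hD : ∀ k, Integrable (D k) P) {m R : ℝ} (hR : 0 < R)
    (hm : ∀ k, ∫ ω, D k ω ∂P ≤ m) :
    P.real {ω | n * R < ∑ k ∈ Finset.range n, D k ω} ≤ m / R := by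
  have hn' : (0 : ℝ) < n := by exact_mod_cast hn
  have h := measureReal_lt_le_div (P := P) (Z := fun ω => ∑ k ∈ Finset.range n, D k ω)
    (R := n * R) (m := n * m) (fun ω => Finset.sum_nonneg fun k _ => hD0 k ω)
    (integrable_finsetSum _ fun k _ => hD k) (by positivity) (by
      rw [integral_finsetSum _ fun k _ => hD k]
      refine (Finset.sum_le_sum fun k _ => hm k).trans ?_
      rw [Finset.sum_const, Finset.card_range, nsmul_eq_mul])
  rwa [mul_div_mul_left _ _ hn'.ne'] at h

/-- Union bound over the grid for the exponential inequality. -/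
lemma prob_grid_le [IsProbabilityMeasure P] (hle : ∀ k, F k ≤ mΩ) (hmono : Monotone F)
    {K d N : ℕ} {x : ℕ → Ω → Fin K → ℝ} {η : ℕ → Ω → ℝ} {v Bx Bq hb : ℝ} (hv : 0 ≤ v)
    (hx : ∀ k j, StronglyMeasurable[F k] fun ω => x k ω j)
    (hη : ∀ k, StronglyMeasurable[F (k + 1)] (η k)) (hxB : ∀ k ω, eucNorm (x k ω) ≤ Bx)
    (hηb : ∀ k ω, |η k ω| ≤ hb)
    (horth : ∀ k (G : Ω → ℝ) (B : ℝ), StronglyMeasurable[F k] G → (∀ ω, |G ω| ≤ B) →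
        ∫ ω, G ω * η k ω ∂P = 0)
    (hvar : ∀ k (G : Ω → ℝ) (B : ℝ), StronglyMeasurable[F k] G → (∀ ω, 0 ≤ G ω) →
        (∀ ω, |G ω| ≤ B) → ∫ ω, G ω * η k ω ^ 2 ∂P ≤ v * ∫ ω, G ω ∂P) (n : ℕ)
    {q : (Fin d → Fin (N + 1)) → Fin K → ℝ} (hq : ∀ p, eucNorm (q p) ≤ Bq) (hBq : 0 ≤ Bq)
    {l t V : ℝ} (hl : 0 ≤ l) (hlb : l * (Bq * Bx) * hb ≤ 1) :
    P.real {ω | ∃ p, t < |∑ k ∈ Finset.range n, (q p ⬝ᵥ x k ω) * η k ω| ∧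
      ∑ k ∈ Finset.range n, (q p ⬝ᵥ x k ω) ^ 2 ≤ V}
      ≤ ((N : ℝ) + 1) ^ d * (2 * Real.exp (-(l * t) + l ^ 2 * v * V)) := by
  have h1 : ∀ p, P.real {ω | t < |∑ k ∈ Finset.range n, (q p ⬝ᵥ x k ω) * η k ω| ∧
      ∑ k ∈ Finset.range n, (q p ⬝ᵥ x k ω) ^ 2 ≤ V}
        ≤ 2 * Real.exp (-(l * t) + l ^ 2 * v * V) := fun p => by
    refine tail_two_sided (P := P) hle hmono (c := fun k ω => q p ⬝ᵥ x k ω) (cb := Bq * Bx) hv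
      (fun k => ?_) hη (fun k ω => ?_) hηb horth hvar n hl hlb
    · simp only [dotProduct]
      exact Finset.stronglyMeasurable_fun_sum _ fun j _ => (hx k j).const_mul _
    · exact (abs_dot_le _ _).trans (mul_le_mul (hq p) (hxB k ω) (eucNorm_nonneg _) hBq)
  rw [Set.ofPred_exists]
  refine (measureReal_iUnion_fintype_le _).trans ((Finset.sum_le_sum fun p _ => h1 p).trans ?_)
  rw [Finset.sum_const, nsmul_eq_mul]
  simp

end Probability

/-! ### The tail bound for one sample size -/

section Assembly

variable {Ω : Type} {mΩ : MeasurableSpace Ω} {P : Measure Ω} {F : ℕ → MeasurableSpace Ω}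

/-- The tail bound for one sample size, with explicit constants: `M₁` bounds the estimation error of
the moment matrices, `M₂` the norm of the score `w`, `M₃` the truncation error, and `M₄` the
martingale averages over the grid. -/
lemma core_bound [IsProbabilityMeasure P] (hle : ∀ k, F k ≤ mΩ) (hmono : Monotone F)
    {d J K n : ℕ} (hlog : 1 ≤ Real.log n) (hn : 0 < n) (hJ : 0 < J) (hJK : J ≤ K)
    {σ C α δ B v Mδ : ℝ} (hσ : 0 < σ) (hσ1 : σ ≤ 1) (hC : 0 < C) (hδ : 0 < δ)
    (hB : 0 < B) (hv : 0 ≤ v)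
    (hK : (K : ℝ) ≤ C * ((n : ℝ) / Real.log n) ^ (δ / (2 + δ)))
    {f : (Fin d → ℝ) → Fin J → ℝ}
    (hf : ∀ y, ∃ L : (Fin d → ℝ) →L[ℝ] (Fin J → ℝ),
      HasFDerivAt f L y ∧ ∀ u : Fin d → ℝ, eucNorm (L u) ≤ C * (J : ℝ) ^ α * eucNorm u)
    (hfB : ∀ y, eucNorm (f y) ≤ B * Real.sqrt J)
    {x : ℕ → Ω → Fin K → ℝ} (hx : ∀ k j, StronglyMeasurable[F k] fun ω => x k ω j)
    (hxB : ∀ k ω, eucNorm (x k ω) ≤ B * Real.sqrt K)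
    {e : ℕ → Ω → ℝ} (he : ∀ k, StronglyMeasurable[F (k + 1)] (e k))
    (hzero : ∀ k, P[e k | F k] =ᵐ[P] 0) (hsq : ∀ k, Integrable (fun ω => e k ω ^ 2) P)
    (hvar : ∀ k, ∀ᵐ ω ∂P, (P[fun ω => e k ω ^ 2 | F k]) ω ≤ v)
    (hmom : ∀ k, Integrable (fun ω => |e k ω| ^ (2 + δ)) P)
    (hMδ : ∀ k, ∫ ω, |e k ω| ^ (2 + δ) ∂P ≤ Mδ)
    {S : Matrix (Fin J) (Fin K) ℝ} (hS : ∀ v, σ * eucNorm v ≤ eucNorm (Sᵀ *ᵥ v))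
    {Sh : Ω → Matrix (Fin J) (Fin K) ℝ} {A : Ω → Matrix (Fin K) (Fin K) ℝ}
    (hA : ∀ ω, A ω = Matrix.of fun k k' =>
      (1 / n : ℝ) * ∑ i ∈ Finset.range n, x i ω k * x i ω k')
    {w : Ω → Fin K → ℝ}
    (hw : ∀ ω, w ω = fun k => (1 / n : ℝ) * ∑ i ∈ Finset.range n, x i ω k * e i ω)
    {M1 M2 M3 M4 θ : ℝ} (hM1 : 0 ≤ M1) (hM2 : 0 < M2) (hM3 : 0 < M3) (hM4 : 0 ≤ M4)
    (hθ : θ = 1 / (2 * B ^ 2 * Real.sqrt C)) :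
    P.real {ω | (M4 + B ^ 2 * M3 * Real.sqrt C + C * Real.sqrt d * M2 + 10 * B * M1 * M2)
        * (σ⁻¹ * Real.sqrt (K * Real.log n / n))
        < ⨆ y : (Set.Icc (0 : Fin d → ℝ) 1),
          |f y.1 ⬝ᵥ (((Sh ω * (A ω)⁻¹ * (Sh ω)ᵀ)⁻¹ * Sh ω * (A ω)⁻¹) *ᵥ w ω)|}
      ≤ P.real {ω | 1 / 2 < σ⁻¹ * (specNorm (A ω - 1) + specNorm (Sh ω - S))}
        + P.real {ω | M1 * Real.sqrt (Real.log n / K)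
            < σ⁻¹ * (specNorm (A ω - 1) + specNorm (Sh ω - S))}
        + v * B ^ 2 / M2 ^ 2 + 2 * Mδ / M3
        + ((⌈(J : ℝ) ^ α⌉₊ : ℝ) + 1) ^ d
          * (2 * Real.exp (-(θ * M4 - 2 * θ ^ 2 * v * B ^ 2) * Real.log n)) := by
  have hn' : (0 : ℝ) < n := by exact_mod_cast hn
  have hl0 : 0 < Real.log n := by linarith
  have hJ' : (0 : ℝ) < J := by exact_mod_cast hJ
  have hK' : (0 : ℝ) < K := by exact_mod_cast hJ.trans_le hJK
  have hJK' : (J : ℝ) ≤ K := by exact_mod_cast hJK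
  have hσi : 0 < σ⁻¹ := inv_pos.2 hσ
  have hsC : 0 < Real.sqrt C := Real.sqrt_pos.2 hC
  have hθ0 : 0 < θ := by rw [hθ]; positivity
  obtain ⟨hr1, hr2⟩ := rate_bounds hδ hC hn' hl0 hK'.le hK
  set r := Real.sqrt (K * Real.log n / n) with hr
  have hr0 : 0 ≤ r := Real.sqrt_nonneg _
  have hrsq : r ^ 2 = K * Real.log n / n := Real.sq_sqrt (by positivity)
  set T := ((n : ℝ) / Real.log n) ^ (1 / (2 + δ)) with hT
  have hT0 : 0 < T := Real.rpow_pos_of_pos (div_pos hn' hl0) _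
  set N := ⌈(J : ℝ) ^ α⌉₊ with hN
  have hJα : 0 < (J : ℝ) ^ α := Real.rpow_pos_of_pos hJ' _
  have hN0 : 0 < N := Nat.ceil_pos.2 hJα
  have hNle : (J : ℝ) ^ α ≤ N := Nat.le_ceil _
  have hN0' : (0 : ℝ) < N := by exact_mod_cast hN0
  have hsJK : Real.sqrt J ≤ Real.sqrt K := Real.sqrt_le_sqrt hJK'
  have hsK2 : Real.sqrt K * Real.sqrt K = K := Real.mul_self_sqrt hK'.le
  have hem : ∀ k, Measurable (e k) := fun k => ((he k).mono (hle _)).measurable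
  have hMδ0 : 0 ≤ Mδ :=
    (integral_nonneg fun ω => Real.rpow_nonneg (abs_nonneg _) _).trans (hMδ 0)
  choose mm η hmm hη hηb horth hηvar hDi hD using
    fun k => exists_trunc (P := P) (hle k) hT0.le (hem k) (hzero k) (hsq k) (hvar k)
  have hηm : ∀ k, StronglyMeasurable[F (k + 1)] (η k) := fun k => by
    have e1 : η k = fun ω => (if |e k ω| ≤ T then e k ω else 0) - mm k ω := funext (hη k)
    have h1 : Measurable[F (k + 1)] (e k) := (he k).measurable
    rw [e1]
    refine StronglyMeasurable.sub ?_ ((hmm k).mono (hmono k.le_succ))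
    exact StronglyMeasurable.ite (measurableSet_le (he k).norm.measurable measurable_const) (he k)
      stronglyMeasurable_zero
  -- the five exceptional events
  set q : (Fin d → Fin (N + 1)) → Fin K → ℝ :=
    fun p => ((S * Sᵀ)⁻¹ * S)ᵀ *ᵥ f (gridPt N p) with hq
  have hqB : ∀ p, eucNorm (q p) ≤ σ⁻¹ * (B * Real.sqrt J) := fun p =>
    (eucNorm_transpose_mulVec_le _ hσi.le (popCoef_norm_le hσ hS) _).trans
      (mul_le_mul_of_nonneg_left (hfB _) hσi.le)
  set t := n * (M4 * σ⁻¹ * r) with ht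
  set V := 2 * n * (σ⁻¹ * (B * Real.sqrt J)) ^ 2 with hV
  set R := M3 * T ^ (-(1 + δ)) with hR
  have hTp : 0 < T ^ (-(1 + δ)) := Real.rpow_pos_of_pos hT0 _
  have hR0 : 0 < R := mul_pos hM3 hTp
  set E1 := {ω | 1 / 2 < σ⁻¹ * (specNorm (A ω - 1) + specNorm (Sh ω - S))} with hE1
  set E2 := {ω | M1 * Real.sqrt (Real.log n / K)
            < σ⁻¹ * (specNorm (A ω - 1) + specNorm (Sh ω - S))} with hE2
  set E3 := {ω | M2 * Real.sqrt (K / n) <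
    eucNorm fun j => (1 / n : ℝ) * ∑ i ∈ Finset.range n, x i ω j * e i ω} with hE3
  set E4 := {ω | n * R < ∑ k ∈ Finset.range n, |e k ω - η k ω|} with hE4
  set E5 := {ω | ∃ p, t < |∑ k ∈ Finset.range n, (q p ⬝ᵥ x k ω) * η k ω| ∧
      ∑ k ∈ Finset.range n, (q p ⬝ᵥ x k ω) ^ 2 ≤ V} with hE5
  have p3 : P.real E3 ≤ v * B ^ 2 / M2 ^ 2 := by
    refine (prob_eucNorm_avg_le hle hmono hn hv hx he hxB hzero hsq hvar
      (mul_pos hM2 (Real.sqrt_pos.2 (by positivity)))).trans_eq ?_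
    rw [mul_pow, mul_pow, Real.sq_sqrt hK'.le, Real.sq_sqrt (by positivity)]
    field_simp
  have p4 : P.real E4 ≤ 2 * Mδ / M3 := by
    refine (prob_sum_diff_le hn (fun k ω => abs_nonneg _) hDi hR0
      (m := 2 * (T ^ (-(1 + δ)) * Mδ)) fun k => ?_).trans_eq ?_
    · refine (hD k).trans (mul_le_mul_of_nonneg_left ?_ two_pos.le)
      exact (integral_tail_le hT0 hδ (hmom k)).trans (mul_le_mul_of_nonneg_left (hMδ k) hTp.le)
    · rw [hR]; field_simp
  have p5 : P.real E5 ≤ ((N : ℝ) + 1) ^ d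
      * (2 * Real.exp (-(θ * M4 - 2 * θ ^ 2 * v * B ^ 2) * Real.log n)) := by
    -- the exponent `l` is the largest one the truncation level allows
    refine (prob_grid_le hle hmono hv hx hηm hxB hηb horth hηvar n hqB (by positivity)
      (l := θ * σ * r / K) (by positivity) ?_).trans ?_
    · have e1 : θ * σ * r / K * (σ⁻¹ * (B * Real.sqrt J) * (B * Real.sqrt K)) * (2 * T)
          = 2 * θ * B ^ 2 * (T * r) * (Real.sqrt J * Real.sqrt K / K) := by field_simp
      have e2 : Real.sqrt J * Real.sqrt K / K ≤ 1 := by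
        rw [div_le_one hK']
        exact (mul_le_mul_of_nonneg_right hsJK (Real.sqrt_nonneg _)).trans_eq hsK2
      rw [e1]
      calc _ ≤ 2 * θ * B ^ 2 * Real.sqrt C * 1 := by gcongr
        _ = 1 := by rw [hθ]; field_simp
    · refine mul_le_mul_of_nonneg_left (mul_le_mul_of_nonneg_left
        (Real.exp_le_exp.2 ?_) two_pos.le) (by positivity)
      have e1 : θ * σ * r / K * t = θ * M4 * Real.log n := by
        have : θ * σ * r / K * t = θ * M4 * n * r ^ 2 / K := by rw [ht]; field_simp
        rw [this, hrsq]; field_simp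
      have e2 : (θ * σ * r / K) ^ 2 * v * V = 2 * θ ^ 2 * v * B ^ 2 * Real.log n * (J / K) := by
        have : (θ * σ * r / K) ^ 2 * v * V
            = 2 * θ ^ 2 * v * B ^ 2 * n * r ^ 2 * (Real.sqrt J) ^ 2 / K ^ 2 := by
          rw [hV]; field_simp
        rw [this, hrsq, Real.sq_sqrt hJ'.le]; field_simp
      have e3 : (J : ℝ) / K ≤ 1 := (div_le_one hK').2 hJK'
      rw [e1, e2]
      have : 2 * θ ^ 2 * v * B ^ 2 * Real.log n * (J / K) ≤ 2 * θ ^ 2 * v * B ^ 2 * Real.log n * 1 := by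
        gcongr
      linarith
  have hsub : {ω | (M4 + B ^ 2 * M3 * Real.sqrt C + C * Real.sqrt d * M2 + 10 * B * M1 * M2)
        * (σ⁻¹ * r)
        < ⨆ y : (Set.Icc (0 : Fin d → ℝ) 1),
          |f y.1 ⬝ᵥ (((Sh ω * (A ω)⁻¹ * (Sh ω)ᵀ)⁻¹ * Sh ω * (A ω)⁻¹) *ᵥ w ω)|}
      ⊆ E1 ∪ E2 ∪ E3 ∪ E4 ∪ E5 := by
    intro ω hω
    by_contra hcon
    simp only [Set.mem_union, not_or] at hcon
    obtain ⟨⟨⟨⟨h1, h2⟩, h3⟩, h4⟩, h5⟩ := hcon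
    have h1' := not_lt.1 (Set.notMem_ofPred_iff.1 h1)
    have h2' := not_lt.1 (Set.notMem_ofPred_iff.1 h2)
    have h3' := not_lt.1 (Set.notMem_ofPred_iff.1 h3)
    have h4' := not_lt.1 (Set.notMem_ofPred_iff.1 h4)
    have h5' := not_exists.1 (Set.notMem_ofPred_iff.1 h5)
    refine absurd hω (Set.notMem_ofPred_iff.2 (not_lt.2 ?_))
    have : Nonempty (Set.Icc (0 : Fin d → ℝ) 1) := ⟨⟨0, le_refl _, zero_le_one⟩⟩
    refine ciSup_le fun y => ?_
    refine (det_bound hn hN0 hσ hσ1 (by positivity) hf hfB (fun k => hxB k ω)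
      (fun k => e k ω) (fun k => η k ω) hS (hA ω) (hw ω) h1' le_rfl h5' h4' y.2).trans ?_
    rw [← hw ω] at h3'
    have hsr : Real.sqrt (K / n) ≤ r := Real.sqrt_le_sqrt (by
      rw [mul_div_right_comm]; exact le_mul_of_one_le_right (by positivity) hlog)
    have hlK : Real.sqrt (Real.log n / K) * Real.sqrt (K / n) * Real.sqrt J ≤ r := by
      rw [← Real.sqrt_mul (by positivity), ← Real.sqrt_mul (by positivity)]
      refine Real.sqrt_le_sqrt ?_
      have : Real.log n / K * (K / n) * J = J * Real.log n / n := by field_simp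
      rw [this]
      gcongr
    have b1 : 1 / (n : ℝ) * (t + σ⁻¹ * (B * Real.sqrt J) * (B * Real.sqrt K) * (n * R))
        ≤ (M4 + B ^ 2 * M3 * Real.sqrt C) * (σ⁻¹ * r) := by
      have e1 : 1 / (n : ℝ) * (t + σ⁻¹ * (B * Real.sqrt J) * (B * Real.sqrt K) * (n * R))
          = M4 * (σ⁻¹ * r)
            + B ^ 2 * M3 * σ⁻¹ * (Real.sqrt J * Real.sqrt K * T ^ (-(1 + δ))) := by
        rw [ht, hR]; field_simp
      have e2 : Real.sqrt J * Real.sqrt K * T ^ (-(1 + δ)) ≤ Real.sqrt C * r := by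
        refine le_trans ?_ hr2
        refine mul_le_mul_of_nonneg_right ?_ hTp.le
        exact (mul_le_mul_of_nonneg_right hsJK (Real.sqrt_nonneg _)).trans_eq hsK2
      rw [e1]
      calc _ ≤ M4 * (σ⁻¹ * r) + B ^ 2 * M3 * σ⁻¹ * (Real.sqrt C * r) := by gcongr
        _ = _ := by ring
    have b2 : C * (J : ℝ) ^ α * (Real.sqrt d / N) * (σ⁻¹ * eucNorm (w ω))
        ≤ C * Real.sqrt d * M2 * (σ⁻¹ * r) := by
      have e1 : (J : ℝ) ^ α / N ≤ 1 := (div_le_one hN0').2 hNle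
      calc C * (J : ℝ) ^ α * (Real.sqrt d / N) * (σ⁻¹ * eucNorm (w ω))
          = C * Real.sqrt d * ((J : ℝ) ^ α / N) * (σ⁻¹ * eucNorm (w ω)) := by ring
        _ ≤ C * Real.sqrt d * 1 * (σ⁻¹ * (M2 * r)) := by
            have hw0 := eucNorm_nonneg (w ω)
            gcongr
            exact h3'.trans (mul_le_mul_of_nonneg_left hsr hM2.le)
        _ = _ := by ring
    have b3 : B * Real.sqrt J * (10 * σ⁻¹ * (σ⁻¹ * (specNorm (A ω - 1) + specNorm (Sh ω - S)))
        * eucNorm (w ω)) ≤ 10 * B * M1 * M2 * (σ⁻¹ * r) := by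
      have hw0 := eucNorm_nonneg (w ω)
      calc B * Real.sqrt J * (10 * σ⁻¹ * (σ⁻¹ * (specNorm (A ω - 1) + specNorm (Sh ω - S)))
            * eucNorm (w ω))
          ≤ B * Real.sqrt J * (10 * σ⁻¹ * (M1 * Real.sqrt (Real.log n / K))
            * (M2 * Real.sqrt (K / n))) := by gcongr
        _ = 10 * B * M1 * M2 * σ⁻¹
            * (Real.sqrt (Real.log n / K) * Real.sqrt (K / n) * Real.sqrt J) := by ring
        _ ≤ 10 * B * M1 * M2 * σ⁻¹ * r := by gcongr
        _ = _ := by ring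
    linarith
  refine (measureReal_mono hsub).trans ?_
  refine (measureReal_union_le _ _).trans (add_le_add ?_ p5)
  refine (measureReal_union_le _ _).trans (add_le_add ?_ p4)
  refine (measureReal_union_le _ _).trans (add_le_add ?_ p3)
  exact measureReal_union_le _ _

end Assembly

/-! ### Indexing, grid cardinality and stationarity -/

section Setup

variable {Ω : Type} {mΩ : MeasurableSpace Ω} {P : Measure Ω}

lemma sum_Icc_int_eq (n : ℕ) (f : ℤ → ℝ) :
    ∑ i ∈ Finset.Icc (1 : ℤ) n, f i = ∑ k ∈ Finset.range n, f ((k : ℤ) + 1) := by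
  refine Finset.sum_nbij' (fun i => (i - 1).toNat) (fun k => (k : ℤ) + 1) ?_ ?_ ?_ ?_ ?_
  · intro i hi
    rw [Finset.mem_Icc] at hi
    rw [Finset.mem_range]
    omega
  · intro k hk
    rw [Finset.mem_range] at hk
    rw [Finset.mem_Icc]
    omega
  · intro i hi
    rw [Finset.mem_Icc] at hi
    omega
  · intro k hk
    omega
  · intro i hi
    rw [Finset.mem_Icc] at hi
    congr 1
    omega

/-- The number of grid points is polynomial in `n`, so it is absorbed by a large enough exponent. -/
lemma grid_count_le {d J K n : ℕ} {C α δ : ℝ} (hlog : 1 ≤ Real.log n) (hn : 0 < n) (hJ : 0 < J)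
    (hJK : J ≤ K) (hC : 0 < C) (hα : 0 < α) (hδ : 0 < δ)
    (hK : (K : ℝ) ≤ C * ((n : ℝ) / Real.log n) ^ (δ / (2 + δ))) :
    ((⌈(J : ℝ) ^ α⌉₊ : ℝ) + 1) ^ d * (2 * Real.exp (-(α * d + 1) * Real.log n))
      ≤ 2 * (3 * C ^ α) ^ d / n := by
  have hn1 : (1 : ℝ) ≤ n := by exact_mod_cast hn
  have hn' : (0 : ℝ) < n := by linarith
  have hl0 : 0 < Real.log n := by linarith
  have hJ1 : (1 : ℝ) ≤ J := by exact_mod_cast hJ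
  have hJK' : (J : ℝ) ≤ K := by exact_mod_cast hJK
  have hJn : (J : ℝ) ≤ C * n := by
    refine (hJK'.trans hK).trans (mul_le_mul_of_nonneg_left ?_ hC.le)
    calc ((n : ℝ) / Real.log n) ^ (δ / (2 + δ)) ≤ (n : ℝ) ^ (δ / (2 + δ)) :=
          Real.rpow_le_rpow (by positivity) (div_le_self hn'.le hlog) (by positivity)
      _ ≤ (n : ℝ) ^ (1 : ℝ) := Real.rpow_le_rpow_of_exponent_le hn1
          ((div_le_one (by positivity)).2 (by linarith))
      _ = n := Real.rpow_one _
  have hJα : 1 ≤ (J : ℝ) ^ α := Real.one_le_rpow hJ1 hα.le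
  have hNb : (⌈(J : ℝ) ^ α⌉₊ : ℝ) + 1 ≤ 3 * C ^ α * (n : ℝ) ^ α := by
    have h1 := Nat.ceil_lt_add_one (a := (J : ℝ) ^ α) (by linarith)
    have h2 : (J : ℝ) ^ α ≤ C ^ α * (n : ℝ) ^ α := by
      rw [← Real.mul_rpow hC.le hn'.le]
      exact Real.rpow_le_rpow (by linarith) hJn hα.le
    linarith
  have he : Real.exp (-(α * d + 1) * Real.log n) = ((n : ℝ) ^ α) ^ (-(d : ℝ)) * (n : ℝ)⁻¹ := by
    rw [← Real.rpow_mul hn'.le, ← Real.rpow_neg_one, ← Real.rpow_add hn', Real.rpow_def_of_pos hn']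
    ring_nf
  have hp : 0 < (n : ℝ) ^ α := Real.rpow_pos_of_pos hn' _
  calc _ ≤ (3 * C ^ α * (n : ℝ) ^ α) ^ d * (2 * Real.exp (-(α * d + 1) * Real.log n)) := by gcongr
    _ = 2 * (3 * C ^ α) ^ d / n * (((n : ℝ) ^ α) ^ d * ((n : ℝ) ^ α) ^ (-(d : ℝ))) := by
        rw [he, mul_pow]; field_simp
    _ = _ := by
        rw [Real.rpow_neg hp.le, Real.rpow_natCast, mul_inv_cancel₀ (by positivity), mul_one]

/-- Strict stationarity of the observations makes the model errors identically distributed. -/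
lemma moment_of_stationary {d : ℕ} {X Y2 : ℤ → Ω → (Fin d → ℝ)} {Y1 eps : ℤ → Ω → ℝ}
    (hX : ∀ i, Measurable (X i)) (hY2 : ∀ i, Measurable (Y2 i)) (hY1 : ∀ i, Measurable (Y1 i))
    {h0 : (Fin d → ℝ) → ℝ} (hh0 : Measurable h0)
    (hmodel : ∀ i ω, Y1 i ω = h0 (Y2 i ω) + eps i ω)
    (hstat : ∀ k : ℤ,
      Measure.map (fun ω => fun i : ℤ => (X (i + k) ω, Y1 (i + k) ω, Y2 (i + k) ω)) P
        = Measure.map (fun ω => fun i : ℤ => (X i ω, Y1 i ω, Y2 i ω)) P)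
    {p : ℝ} (hmom : Integrable (fun ω => |eps 0 ω| ^ p) P) (i : ℤ) :
    Integrable (fun ω => |eps i ω| ^ p) P ∧
      ∫ ω, |eps i ω| ^ p ∂P = ∫ ω, |eps 0 ω| ^ p ∂P := by
  set Z : ℤ → Ω → (ℤ → (Fin d → ℝ) × ℝ × (Fin d → ℝ)) :=
    fun k ω j => (X (j + k) ω, Y1 (j + k) ω, Y2 (j + k) ω) with hZ
  have hZm : ∀ k, Measurable (Z k) := fun k =>
    measurable_pi_iff.2 fun j => (hX _).prodMk ((hY1 _).prodMk (hY2 _))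
  have hid : IdentDistrib (Z i) (Z 0) P P := by
    refine ⟨(hZm i).aemeasurable, (hZm 0).aemeasurable, ?_⟩
    have := (hstat i).trans (hstat 0).symm
    exact this
  set g : (ℤ → (Fin d → ℝ) × ℝ × (Fin d → ℝ)) → ℝ := fun z => |(z 0).2.1 - h0 (z 0).2.2| ^ p
    with hg
  have hgm : Measurable g := by
    have h1 : Measurable fun z : ℤ → (Fin d → ℝ) × ℝ × (Fin d → ℝ) => z 0 := measurable_pi_apply 0
    have h2 : Measurable fun z : ℤ → (Fin d → ℝ) × ℝ × (Fin d → ℝ) =>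
      (z 0).2.1 - h0 (z 0).2.2 :=
      (measurable_fst.comp (measurable_snd.comp h1)).sub
        (hh0.comp (measurable_snd.comp (measurable_snd.comp h1)))
    exact (measurable_abs.comp h2).pow_const p
  have hge : ∀ k, g ∘ Z k = fun ω => |eps k ω| ^ p := fun k => by
    funext ω
    simp only [hg, hZ, Function.comp_apply, zero_add, hmodel, add_sub_cancel_left]
  have h := hid.comp hgm
  rw [hge, hge] at h
  exact ⟨h.integrable_iff.2 hmom, h.integral_eq⟩

end Setup

/-- The triangle inequality for real suprema, valid also when the suprema degenerate: an
unbounded family has `⨆ = 0`, and `g - h` is bounded. -/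
lemma iSup_abs_sub_le {ι : Type*} [Nonempty ι] {f g h : ι → ℝ} {B : ℝ}
    (hB : ∀ y, |h y - g y| ≤ B) :
    (⨆ y, |f y - h y|) ≤ (⨆ y, |f y - g y|) + ⨆ y, |h y - g y| := by
  have hbd : BddAbove (Set.range fun y => |h y - g y|) := ⟨B, by rintro _ ⟨y, rfl⟩; exact hB y⟩
  by_cases hfg : BddAbove (Set.range fun y => |f y - g y|)
  · refine ciSup_le fun y => ?_
    refine le_trans ?_ (add_le_add (le_ciSup hfg y) (le_ciSup hbd y))
    have := abs_sub_le (f y) (g y) (h y)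
    rwa [abs_sub_comm (g y)] at this
  · have hfh : ¬ BddAbove (Set.range fun y => |f y - h y|) := fun ⟨M, hM⟩ => by
      refine hfg ⟨M + B, ?_⟩
      rintro _ ⟨y, rfl⟩
      exact (abs_sub_le _ _ _).trans (add_le_add (hM ⟨y, rfl⟩) (hB y))
    rw [Real.iSup_of_not_bddAbove hfh, Real.iSup_of_not_bddAbove hfg, zero_add]
    exact Real.iSup_nonneg fun y => abs_nonneg _

/-! ### The sup-norm rate -/

/-- Theorem 1, general upper bound on the sup-norm "variance
term" of the sieve NPIV estimator: under the NPIV model with weakly dependent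
data, `sup_y |ĥ(y) - P_n h₀(y)| = O_p(σ_JK⁻¹ √(K log n / n))`, and hence
`‖h₀ - ĥ‖_∞ ≤ ‖h₀ - P_n h₀‖_∞ + O_p(σ_JK⁻¹ √(K log n / n))`.
Here `Rψ n` and `Rb n` are the positive-definite symmetric square roots of the
Gram matrices, so `ψ̃ = (Rψ n)⁻¹ ψ` and `b̃ = (Rb n)⁻¹ b` are the
orthonormalized bases; generalized matrix inverses are rendered by Lean's
`Matrix.inv` (which agrees with the Moore–Penrose inverse whenever the matrix
is invertible, as happens with probability approaching one). -/
theorem stmt0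
    {Ω : Type} [mΩ : MeasurableSpace Ω] (P : Measure Ω) [IsProbabilityMeasure P]
    (d : ℕ) (hd : 0 < d)
    (X Y2 : ℤ → Ω → (Fin d → ℝ)) (Y1 eps : ℤ → Ω → ℝ)
    (hXmeas : ∀ i, Measurable (X i)) (hY2meas : ∀ i, Measurable (Y2 i))
    (hY1meas : ∀ i, Measurable (Y1 i)) (hepsmeas : ∀ i, Measurable (eps i))
    (h0 : (Fin d → ℝ) → ℝ) (hh0meas : Measurable h0)
    -- model: Y₁ᵢ = h₀(Y₂ᵢ) + εᵢ with E[εᵢ|Xᵢ] = 0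
    (hmodel : ∀ i ω, Y1 i ω = h0 (Y2 i ω) + eps i ω)
    (hexog : ∀ i, P[eps i | MeasurableSpace.comap (X i) inferInstance] =ᵐ[P] 0)
    -- strict stationarity of Zᵢ = (Xᵢ, Y₁ᵢ, Y₂ᵢ)
    (hstat : ∀ k : ℤ,
      Measure.map (fun ω => fun i : ℤ => (X (i + k) ω, Y1 (i + k) ω, Y2 (i + k) ω)) P
        = Measure.map (fun ω => fun i : ℤ => (X i ω, Y1 i ω, Y2 i ω)) P)
    -- supports
    (hsupp : ∀ i, ∀ᵐ ω ∂P, X i ω ∈ Set.Icc (0 : Fin d → ℝ) 1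
      ∧ Y2 i ω ∈ Set.Icc (0 : Fin d → ℝ) 1)
    -- densities of X and Y₂ bounded away from zero and infinity on the cube
    (fX fY : (Fin d → ℝ) → ℝ≥0∞) (cd1 cd2 : ℝ≥0∞) (hcd1 : 0 < cd1) (hcd2 : cd2 < ⊤)
    (hfX : Measure.map (X 0) P
      = (volume.restrict (Set.Icc (0 : Fin d → ℝ) 1)).withDensity fX)
    (hfY : Measure.map (Y2 0) P
      = (volume.restrict (Set.Icc (0 : Fin d → ℝ) 1)).withDensity fY)
    (hfXbd : ∀ x ∈ Set.Icc (0 : Fin d → ℝ) 1, cd1 ≤ fX x ∧ fX x ≤ cd2)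
    (hfYbd : ∀ y ∈ Set.Icc (0 : Fin d → ℝ) 1, cd1 ≤ fY y ∧ fY y ≤ cd2)
    -- the σ-algebras 𝓕ᵢ = σ(X_{i+1}, Xᵢ, εᵢ, X_{i-1}, ε_{i-1}, …)
    (F : ℤ → MeasurableSpace Ω)
    (hF : ∀ i, F i = (MeasurableSpace.comap (X (i + 1)) inferInstance
      ⊔ ⨆ j : {j : ℤ // j ≤ i}, (MeasurableSpace.comap (X j.1) inferInstance
          ⊔ MeasurableSpace.comap (eps j.1) inferInstance)))
    -- martingale difference structure and conditional second moment bounds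
    (hmds : ∀ i, P[eps i | F (i - 1)] =ᵐ[P] 0)
    (cv1 cv2 : ℝ) (hcv1 : 0 < cv1)
    (hcond2 : ∀ i, ∀ᵐ ω ∂P, cv1 ≤ (P[fun ω' => eps i ω' ^ 2 | F (i - 1)]) ω
      ∧ (P[fun ω' => eps i ω' ^ 2 | F (i - 1)]) ω ≤ cv2)
    -- (2+δ)-moment of the error
    (δ : ℝ) (hδ : 0 < δ)
    (hmom : Integrable (fun ω => |eps 0 ω| ^ (2 + δ)) P)
    -- sieve dimensions
    (J K : ℕ → ℕ) (hJtop : Tendsto J atTop atTop) (hKtop : Tendsto K atTop atTop)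
    -- sieve bases with sup-norm and eigenvalue bounds
    (ψ : ∀ n : ℕ, (Fin d → ℝ) → Fin (J n) → ℝ) (hψcont : ∀ n, Continuous (ψ n))
    (b : ∀ n : ℕ, (Fin d → ℝ) → Fin (K n) → ℝ) (hbcont : ∀ n, Continuous (b n))
    (C : ℝ) (hC : 0 < C)
    (hψbd : ∀ n y, eucNorm (ψ n y) ≤ C * Real.sqrt (J n))
    (hbbd : ∀ n x, eucNorm (b n x) ≤ C * Real.sqrt (K n))
    (Gψ : ∀ n : ℕ, Matrix (Fin (J n)) (Fin (J n)) ℝ)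
    (hGψ : ∀ n, Gψ n = Matrix.of fun j j' =>
      ∫ ω, ψ n (Y2 0 ω) j * ψ n (Y2 0 ω) j' ∂P)
    (Gb : ∀ n : ℕ, Matrix (Fin (K n)) (Fin (K n)) ℝ)
    (hGb : ∀ n, Gb n = Matrix.of fun k k' =>
      ∫ ω, b n (X 0 ω) k * b n (X 0 ω) k' ∂P)
    (lam : ℝ) (hlam : 0 < lam)
    (hGψpos : ∀ n (v : Fin (J n) → ℝ), lam * (∑ j, v j ^ 2) ≤ v ⬝ᵥ (Gψ n).mulVec v)
    (hGbpos : ∀ n (v : Fin (K n) → ℝ), lam * (∑ k, v k ^ 2) ≤ v ⬝ᵥ (Gb n).mulVec v)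
    -- positive-definite square roots of the Gram matrices and the
    -- orthonormalized bases ψ̃ = Gψ^{-1/2} ψ, b̃ = Gb^{-1/2} b
    (Rψ : ∀ n : ℕ, Matrix (Fin (J n)) (Fin (J n)) ℝ)
    (hRψpos : ∀ n, (Rψ n).PosDef) (hRψ : ∀ n, Rψ n * Rψ n = Gψ n)
    (Rb : ∀ n : ℕ, Matrix (Fin (K n)) (Fin (K n)) ℝ)
    (hRbpos : ∀ n, (Rb n).PosDef) (hRb : ∀ n, Rb n * Rb n = Gb n)
    (ψt : ∀ n : ℕ, (Fin d → ℝ) → Fin (J n) → ℝ)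
    (hψt : ∀ n y, ψt n y = (Rψ n)⁻¹.mulVec (ψ n y))
    (bt : ∀ n : ℕ, (Fin d → ℝ) → Fin (K n) → ℝ)
    (hbt : ∀ n x, bt n x = (Rb n)⁻¹.mulVec (b n x))
    -- ψ̃ differentiable with gradient bound ‖∇ψ̃(y)‖ ≤ C Jᵅ
    (α : ℝ) (hα : 0 < α)
    (hψtdiff : ∀ n y, ∃ L : (Fin d → ℝ) →L[ℝ] (Fin (J n) → ℝ),
      HasFDerivAt (ψt n) L y
        ∧ ∀ u : Fin d → ℝ, eucNorm (L u) ≤ C * (J n : ℝ) ^ α * eucNorm u)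
    -- S = E[ψ̃(Y₂) b̃(X)'] and its smallest singular value σ_JK > 0
    (S : ∀ n : ℕ, Matrix (Fin (J n)) (Fin (K n)) ℝ)
    (hS : ∀ n, S n = Matrix.of fun j k => ∫ ω, ψt n (Y2 0 ω) j * bt n (X 0 ω) k ∂P)
    (σ : ℕ → ℝ) (hσ : ∀ n, σ n = minSingVal (S n)) (hσpos : ∀ n, 0 < σ n)
    -- the sample matrices B̃'B̃/n and Ŝ = Ψ̃'B̃/n
    (A : ∀ n : ℕ, Ω → Matrix (Fin (K n)) (Fin (K n)) ℝ)
    (hA : ∀ n ω, A n ω = Matrix.of fun k k' =>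
      (1 / n : ℝ) * ∑ i ∈ Finset.Icc (1 : ℤ) n, bt n (X i ω) k * bt n (X i ω) k')
    (Shat : ∀ n : ℕ, Ω → Matrix (Fin (J n)) (Fin (K n)) ℝ)
    (hShat : ∀ n ω, Shat n ω = Matrix.of fun j k =>
      (1 / n : ℝ) * ∑ i ∈ Finset.Icc (1 : ℤ) n, ψt n (Y2 i ω) j * bt n (X i ω) k)
    -- the sieve NPIV estimator ĥ and the projection Pₙh₀
    (hhat Pn : ∀ n : ℕ, Ω → (Fin d → ℝ) → ℝ)
    (hhhat : ∀ n ω y, hhat n ω y = ψt n y ⬝ᵥ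
      (((Shat n ω * (A n ω)⁻¹ * (Shat n ω)ᵀ)⁻¹ * Shat n ω * (A n ω)⁻¹).mulVec
        (fun k => (1 / n : ℝ) * ∑ i ∈ Finset.Icc (1 : ℤ) n, bt n (X i ω) k * Y1 i ω)))
    (hPn : ∀ n ω y, Pn n ω y = ψt n y ⬝ᵥ
      (((Shat n ω * (A n ω)⁻¹ * (Shat n ω)ᵀ)⁻¹ * Shat n ω * (A n ω)⁻¹).mulVec
        (fun k => (1 / n : ℝ) * ∑ i ∈ Finset.Icc (1 : ℤ) n, bt n (X i ω) k * h0 (Y2 i ω))))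
    -- condition (i)
    (hJK : ∀ n, J n ≤ K n)
    (hKrate : ∀ n : ℕ, 2 ≤ n → (K n : ℝ) ≤ C * ((n : ℝ) / Real.log n) ^ (δ / (2 + δ)))
    (hrate : ∀ n : ℕ, 2 ≤ n → (σ n)⁻¹ * Real.sqrt (K n * Real.log n / n) ≤ C)
    -- condition (ii)
    (hii1 : IsBigOpF P
      (fun n ω => (σ n)⁻¹ * (specNorm (A n ω - 1) + specNorm (Shat n ω - S n)))
      (fun n => Real.sqrt (Real.log n / K n)))
    (hii2 : ∀ ε : ℝ, 0 < ε → Tendsto (fun n =>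
      (P {ω | ε < (σ n)⁻¹ * (specNorm (A n ω - 1) + specNorm (Shat n ω - S n))}).toReal)
      atTop (nhds 0)) :
    IsBigOpF P
      (fun n ω => ⨆ y : (Set.Icc (0 : Fin d → ℝ) 1), |hhat n ω y.1 - Pn n ω y.1|)
      (fun n => (σ n)⁻¹ * Real.sqrt (K n * Real.log n / n))
    ∧ ∀ n ω,
        (⨆ y : (Set.Icc (0 : Fin d → ℝ) 1), |h0 y.1 - hhat n ω y.1|)
          ≤ (⨆ y : (Set.Icc (0 : Fin d → ℝ) 1), |h0 y.1 - Pn n ω y.1|)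
            + (⨆ y : (Set.Icc (0 : Fin d → ℝ) 1), |hhat n ω y.1 - Pn n ω y.1|) := by
  -- the constant bounding both orthonormalized bases
  set B := (Real.sqrt lam)⁻¹ * C with hBdef
  have hB : 0 < B := mul_pos (inv_pos.2 (Real.sqrt_pos.2 hlam)) hC
  have hψtB : ∀ n y, eucNorm (ψt n y) ≤ B * Real.sqrt (J n) := fun n y => by
    rw [hψt, hBdef, mul_assoc]
    exact (eucNorm_inv_sqrt_le (hRψpos n) (hRψ n) hlam (hGψpos n) _).trans
      (mul_le_mul_of_nonneg_left (hψbd n y) (inv_nonneg.2 (Real.sqrt_nonneg _)))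
  have hbtB : ∀ n x, eucNorm (bt n x) ≤ B * Real.sqrt (K n) := fun n x => by
    rw [hbt, hBdef, mul_assoc]
    exact (eucNorm_inv_sqrt_le (hRbpos n) (hRb n) hlam (hGbpos n) _).trans
      (mul_le_mul_of_nonneg_left (hbbd n x) (inv_nonneg.2 (Real.sqrt_nonneg _)))
  have hcube : Nonempty (Set.Icc (0 : Fin d → ℝ) 1) := ⟨⟨0, le_refl _, zero_le_one⟩⟩
  -- the difference of the two estimators depends on the errors only
  set w : ∀ n : ℕ, Ω → Fin (K n) → ℝ := fun n ω k =>
    (1 / n : ℝ) * ∑ i ∈ Finset.range n, bt n (X ((i : ℤ) + 1) ω) k * eps ((i : ℤ) + 1) ω with hw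
  have hdiff : ∀ n ω y, hhat n ω y - Pn n ω y = ψt n y ⬝ᵥ
      (((Shat n ω * (A n ω)⁻¹ * (Shat n ω)ᵀ)⁻¹ * Shat n ω * (A n ω)⁻¹) *ᵥ w n ω) := by
    intro n ω y
    rw [hhhat, hPn, ← dotProduct_sub, ← mulVec_sub]
    congr 2
    funext k
    simp only [Pi.sub_apply, hw]
    rw [← mul_sub, ← Finset.sum_sub_distrib, sum_Icc_int_eq]
    congr 1
    refine Finset.sum_congr rfl fun i _ => ?_
    rw [hmodel]
    ring
  refine ⟨?_, fun n ω => ?_⟩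
  swap
  · refine iSup_abs_sub_le (f := fun y : Set.Icc (0 : Fin d → ℝ) 1 => h0 y.1)
      (g := fun y : Set.Icc (0 : Fin d → ℝ) 1 => Pn n ω y.1)
      (h := fun y : Set.Icc (0 : Fin d → ℝ) 1 => hhat n ω y.1)
      (B := B * Real.sqrt (J n) * eucNorm
        (((Shat n ω * (A n ω)⁻¹ * (Shat n ω)ᵀ)⁻¹ * Shat n ω * (A n ω)⁻¹) *ᵥ w n ω)) fun y => ?_
    rw [hdiff]
    exact (abs_dot_le _ _).trans (mul_le_mul_of_nonneg_right (hψtB n _) (eucNorm_nonneg _))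
  -- the filtration, indexed by the natural numbers
  have hXF : ∀ i, Measurable[F i] (X (i + 1)) := fun i => by
    refine measurable_iff_comap_le.2 ?_
    rw [hF i]; exact le_sup_left
  have hjF : ∀ i j, j ≤ i → MeasurableSpace.comap (X j) inferInstance ≤ F i ∧
      MeasurableSpace.comap (eps j) inferInstance ≤ F i := fun i j hj => by
    have h : (MeasurableSpace.comap (X j) inferInstance
          ⊔ MeasurableSpace.comap (eps j) inferInstance) ≤ F i := by
      rw [hF i]
      exact le_sup_of_le_right (le_iSup (fun j : {j : ℤ // j ≤ i} =>
        (MeasurableSpace.comap (X j.1) inferInstance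
          ⊔ MeasurableSpace.comap (eps j.1) inferInstance)) ⟨j, hj⟩)
    exact ⟨le_sup_left.trans h, le_sup_right.trans h⟩
  have hFle : ∀ i, F i ≤ mΩ := fun i => by
    rw [hF i]
    exact sup_le (hXmeas _).comap_le (iSup_le fun j =>
      sup_le (hXmeas _).comap_le (hepsmeas _).comap_le)
  have hFmono : Monotone F := fun i j hij => by
    rw [hF i]
    refine sup_le ?_ (iSup_le fun l => sup_le (hjF j l.1 (l.2.trans hij)).1
      (hjF j l.1 (l.2.trans hij)).2)
    rcases hij.eq_or_lt with h | h
    · rw [h]; exact (hXF j).comap_le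
    · exact (hjF j (i + 1) (by omega)).1
  set G : ℕ → MeasurableSpace Ω := fun k => F (k : ℤ) with hG
  have hGle : ∀ k, G k ≤ mΩ := fun k => hFle _
  have hGmono : Monotone G := fun i j hij => hFmono (by exact_mod_cast hij)
  -- the errors, as a square-integrable martingale difference sequence
  set e : ℕ → Ω → ℝ := fun k => eps ((k : ℤ) + 1) with he
  have heG : ∀ k, StronglyMeasurable[G (k + 1)] (e k) := fun k => by
    refine Measurable.stronglyMeasurable (measurable_iff_comap_le.2 ?_)
    refine (hjF _ _ ?_).2
    push_cast
    rfl
  have hzero : ∀ k, P[e k | G k] =ᵐ[P] 0 := fun k => by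
    have h := hmds ((k : ℤ) + 1)
    rwa [add_sub_cancel_right] at h
  have hv2 : ∀ k : ℕ, ∀ᵐ ω ∂P, cv1 ≤ (P[fun ω' => e k ω' ^ 2 | G k]) ω
      ∧ (P[fun ω' => e k ω' ^ 2 | G k]) ω ≤ cv2 := fun k => by
    have h := hcond2 ((k : ℤ) + 1)
    rwa [add_sub_cancel_right] at h
  have hvar : ∀ k, ∀ᵐ ω ∂P, (P[fun ω' => e k ω' ^ 2 | G k]) ω ≤ cv2 := fun k =>
    (hv2 k).mono fun ω h => h.2
  have hcv2 : 0 < cv2 := by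
    obtain ⟨ω, h⟩ := (hv2 0).exists
    linarith [h.1, h.2]
  -- a non-integrable square would have conditional expectation zero, below `cv1`
  have hsq : ∀ k, Integrable (fun ω => e k ω ^ 2) P := fun k => by
    by_contra hni
    obtain ⟨ω, h⟩ := (hv2 k).exists
    rw [condExp_of_not_integrable hni] at h
    have := h.1
    simp only [Pi.zero_apply] at this
    linarith
  have hmom' := fun k : ℕ =>
    moment_of_stationary hXmeas hY2meas hY1meas hh0meas hmodel hstat hmom ((k : ℤ) + 1)
  set Mδ := ∫ ω, |eps 0 ω| ^ (2 + δ) ∂P with hMδ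
  have hMδ0 : 0 ≤ Mδ := integral_nonneg fun ω => Real.rpow_nonneg (abs_nonneg _) _
  have hbtcont : ∀ n, Continuous (bt n) := fun n => by
    have : bt n = fun x => (Rb n)⁻¹ *ᵥ b n x := funext (hbt n)
    rw [this]
    exact continuous_const.matrix_mulVec (hbcont n)
  have hψtcont : ∀ n, Continuous (ψt n) := fun n => by
    have : ψt n = fun x => (Rψ n)⁻¹ *ᵥ ψ n x := funext (hψt n)
    rw [this]
    exact continuous_const.matrix_mulVec (hψcont n)
  have hxG : ∀ n k j, StronglyMeasurable[G k] fun ω => bt n (X ((k : ℤ) + 1) ω) j := fun n k j =>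
    (((continuous_apply j).comp (hbtcont n)).measurable.comp (hXF k)).stronglyMeasurable
  -- the smallest singular value lies in `(0, 1]`, which excludes `J = 0`
  have hJ0 : ∀ n, 0 < J n := fun n => by
    by_contra hcon
    have h0 : J n = 0 := by omega
    have hz : minSingVal (S n) = 0 := by
      rw [minSingVal]
      convert Real.sInf_empty
      refine Set.eq_empty_iff_forall_notMem.2 ?_
      rintro r ⟨v, hv, -⟩
      have : IsEmpty (Fin (J n)) := by rw [h0]; infer_instance
      simp [eucNorm] at hv
    have := hσpos n
    rw [hσ, hz] at this
    exact lt_irrefl _ this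
  have hσ1 : ∀ n, σ n ≤ 1 := fun n => by
    rw [hσ]
    refine minSingVal_le_one (P := P) (φ := fun ω => ψt n (Y2 0 ω)) (χ := fun ω => bt n (X 0 ω))
      ((hψtcont n).measurable.comp (hY2meas 0)) ((hbtcont n).measurable.comp (hXmeas 0))
      (fun ω => hψtB n _) (fun ω => hbtB n _) ?_ ?_ (hS n) (hJ0 n)
    · simp only [hψt]
      exact integral_orthonormal_sq ((hψcont n).measurable.comp (hY2meas 0))
        (fun ω => hψbd n _) (hRψpos n) (hRψ n) (hGψ n)
    · simp only [hbt]
      exact integral_orthonormal_sq ((hbcont n).measurable.comp (hXmeas 0))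
        (fun ω => hbbd n _) (hRbpos n) (hRb n) (hGb n)
  have hσS : ∀ n v, σ n * eucNorm v ≤ eucNorm ((S n)ᵀ *ᵥ v) := fun n v => by
    rw [hσ]; exact minSingVal_mul_le _ _
  -- each of the five exceptional events gets probability `ε / 5`
  intro ε hε
  have hε5 : 0 < ε / 5 := by positivity
  obtain ⟨M1', hM1'⟩ := hii1 (ε / 10) (by positivity)
  set M1 := max M1' 0 with hM1
  set M2 := Real.sqrt (5 * cv2 * B ^ 2 / ε) with hM2
  have hM20 : 0 < M2 := Real.sqrt_pos.2 (by positivity)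
  have hM2e : cv2 * B ^ 2 / M2 ^ 2 = ε / 5 := by
    rw [hM2, Real.sq_sqrt (by positivity)]; field_simp
  set M3 := 10 * Mδ / ε + 1 with hM3
  have hM30 : 0 < M3 := by positivity
  have hM3e : 2 * Mδ / M3 ≤ ε / 5 := by
    rw [div_le_iff₀ hM30, hM3]
    have : ε / 5 * (10 * Mδ / ε + 1) = 2 * Mδ + ε / 5 := by field_simp; ring
    linarith
  set θ := 1 / (2 * B ^ 2 * Real.sqrt C) with hθ
  have hθ0 : 0 < θ := by
    have := Real.sqrt_pos.2 hC
    positivity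
  -- chosen so that the exponential inequality beats the number of grid points
  set M4 := (α * d + 1 + 2 * θ ^ 2 * cv2 * B ^ 2) / θ with hM4
  have hM40 : 0 ≤ M4 := by positivity
  have hM4e : θ * M4 - 2 * θ ^ 2 * cv2 * B ^ 2 = α * d + 1 := by
    rw [hM4]; field_simp; ring
  refine ⟨M4 + B ^ 2 * M3 * Real.sqrt C + C * Real.sqrt d * M2 + 10 * B * M1 * M2, ?_⟩
  have hev1 : ∀ᶠ n : ℕ in atTop, 1 ≤ Real.log n :=
    (Real.tendsto_log_atTop.comp tendsto_natCast_atTop_atTop).eventually_ge_atTop 1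
  have hev2 : ∀ᶠ n : ℕ in atTop, (P {ω | 1 / 2 < (σ n)⁻¹ *
      (specNorm (A n ω - 1) + specNorm (Shat n ω - S n))}).toReal < ε / 5 :=
    (hii2 (1 / 2) (by norm_num)).eventually_lt_const hε5
  have hev3 : ∀ᶠ n : ℕ in atTop, (P {ω | M1' * Real.sqrt (Real.log n / K n) < |(σ n)⁻¹ *
      (specNorm (A n ω - 1) + specNorm (Shat n ω - S n))|}).toReal < ε / 5 := by
    refine eventually_lt_of_limsup_lt (hM1'.trans_lt (by linarith)) ?_
    exact isBoundedUnder_of ⟨1, fun n => measureReal_le_one⟩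
  have hev4 : ∀ᶠ n : ℕ in atTop, 2 * (3 * C ^ α) ^ d / (n : ℝ) < ε / 5 :=
    (tendsto_const_div_atTop_nhds_zero_nat _).eventually_lt_const hε5
  refine limsup_le_of_le (isCoboundedUnder_le_of_le atTop (x := 0)
    fun n => ENNReal.toReal_nonneg) ?_
  filter_upwards [hev1, hev2, hev3, hev4, eventually_ge_atTop 2] with n h1 h2 h3 h4 hn2
  have hn : 0 < n := by omega
  have hcore := core_bound (P := P) (F := G) hGle hGmono h1 hn (hJ0 n) (hJK n) (hσpos n) (hσ1 n)
    hC hδ hB hcv2.le (hKrate n hn2) (hψtdiff n) (hψtB n)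
    (x := fun k ω => bt n (X ((k : ℤ) + 1) ω)) (hxG n) (fun k ω => hbtB n _) heG hzero hsq hvar
    (fun k => (hmom' k).1) (fun k => (hmom' k).2.le) (hσS n) (Sh := Shat n) (A := A n)
    (fun ω => by simp only [hA, sum_Icc_int_eq]) (w := w n) (fun ω => rfl)
    (le_max_right M1' 0) hM20 hM30 hM40 hθ
  have hgc := grid_count_le (d := d) h1 hn (hJ0 n) (hJK n) hC hα hδ (hKrate n hn2)
  rw [hM4e] at hcore
  have h3' : P.real {ω | M1 * Real.sqrt (Real.log n / K n) < (σ n)⁻¹ *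
      (specNorm (A n ω - 1) + specNorm (Shat n ω - S n))} < ε / 5 := by
    refine (measureReal_mono fun ω hω => ?_).trans_lt h3
    have hω' : M1 * Real.sqrt (Real.log n / K n) < (σ n)⁻¹ *
      (specNorm (A n ω - 1) + specNorm (Shat n ω - S n)) := hω
    exact ((mul_le_mul_of_nonneg_right (le_max_left _ _) (Real.sqrt_nonneg _)).trans_lt
      hω').trans_le (le_abs_self _)
  have hset : {ω | (M4 + B ^ 2 * M3 * Real.sqrt C + C * Real.sqrt d * M2 + 10 * B * M1 * M2)
        * ((σ n)⁻¹ * Real.sqrt (K n * Real.log n / n))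
        < |(⨆ y : (Set.Icc (0 : Fin d → ℝ) 1), |hhat n ω y.1 - Pn n ω y.1|)|}
      = {ω | (M4 + B ^ 2 * M3 * Real.sqrt C + C * Real.sqrt d * M2 + 10 * B * M1 * M2)
        * ((σ n)⁻¹ * Real.sqrt (K n * Real.log n / n))
        < ⨆ y : (Set.Icc (0 : Fin d → ℝ) 1), |ψt n y.1 ⬝ᵥ (((Shat n ω * (A n ω)⁻¹ *
          (Shat n ω)ᵀ)⁻¹ * Shat n ω * (A n ω)⁻¹) *ᵥ w n ω)|} := by
    ext ω
    simp only [Set.mem_ofPred_eq]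
    rw [abs_of_nonneg (Real.iSup_nonneg fun y => abs_nonneg _)]
    simp only [hdiff]
  rw [hset]
  refine hcore.trans ?_
  rw [hM2e]
  have h2' : P.real {ω | 1 / 2 < (σ n)⁻¹ *
      (specNorm (A n ω - 1) + specNorm (Shat n ω - S n))} < ε / 5 := h2
  linarith
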